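/- arXiv:1805.02886 — 2 statements merged into one kernel-verified Lean document; each statement's English description precedes it below -/
import Mathlib

section
/- Let G be a connected graph with k pendant vertices (vertices of degree 1), and suppose G ≠ K_2. Then χ_la(G) ≥ k + 1. -/
open scoped BigOperators

/-- The induced vertex sum: sum of labels of edges incident to `v`. -/
noncomputable def vertexSum {V : Type*} (G : SimpleGraph V) (f : Sym2 V → ℕ) (v : V) : ℕ :=
  ∑ᶠ e ∈ G.incidenceSet v, f e

/-- `f` is a local antimagic labeling of `G`: a bijection from the edge set onto
`{1, …, |E(G)|}` such that adjacent vertices get distinct induced sums. -/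
def IsLocalAntimagic {V : Type*} (G : SimpleGraph V) (f : Sym2 V → ℕ) : Prop :=
  Set.BijOn f G.edgeSet (Set.Icc 1 G.edgeSet.ncard) ∧
  ∀ u v, G.Adj u v → vertexSum G f u ≠ vertexSum G f v

/-- Number of distinct induced vertex labels of the labeling `f`. -/
noncomputable def colorCount {V : Type*} (G : SimpleGraph V) (f : Sym2 V → ℕ) : ℕ :=
  (Set.range (vertexSum G f)).ncard

/-- The local antimagic chromatic number. -/
noncomputable def chiLA {V : Type*} (G : SimpleGraph V) : ℕ :=
  sInf { n | ∃ f, IsLocalAntimagic G f ∧ colorCount G f = n }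

/-- The join `G ∨ Oₙ` of `G` with the empty graph on `n` vertices. -/
def joinEmpty {V : Type*} (G : SimpleGraph V) (n : ℕ) : SimpleGraph (V ⊕ Fin n) :=
  SimpleGraph.fromRel (fun x y =>
    (∃ a b, x = Sum.inl a ∧ y = Sum.inl b ∧ G.Adj a b) ∨ (x.isLeft ∧ y.isRight))

/-!
A pendant vertex receives the label of its only edge. So, unless `G = K₂`, the pendant sums are
distinct and at most `m = |E(G)|`, while a non-pendant end of the edge labelled `m` receives more
than `m`. Every local antimagic labelling therefore has one more sum than there are pendants.

As `sInf ∅ = 0`, it remains to find one local antimagic labelling. The induction works with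
arbitrary initial weights on the vertices and arbitrary large enough sets of labels: choose the
labels of a few edges, delete these edges and add their labels to the initial weights. The only
obstruction to labelling such a graph is a component that is a star whose leaves have equal initial
weights. So star components go first, and then the vertices whose neighbours are, all but one,
leaves of equal initial weight, since these could become such components. Otherwise, give the vertex
that could become heaviest the labels of largest total, so that no neighbour can catch up with it;
exchanging two of these labels inside a component that became an obstruction removes this
obstruction without creating another one.
-/

section LabelSets

variable {s L : Finset ℕ} {a a' : ℕ}

theorem card_insert_erase_of_mem (ha : a ∈ s) (ha' : a' ∉ s) :
    (insert a' (s.erase a)).card = s.card := by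
  rw [Finset.card_insert_of_notMem (mt Finset.mem_of_mem_erase ha'), Finset.card_erase_add_one ha]

theorem sum_insert_erase_add (ha : a ∈ s) (ha' : a' ∉ s) :
    ∑ i ∈ insert a' (s.erase a), i + a = ∑ i ∈ s, i + a' := by
  rw [Finset.sum_insert (mt Finset.mem_of_mem_erase ha'), add_assoc, Finset.sum_erase_add _ _ ha,
    add_comm]

/-- The largest sum of `k` distinct elements of `L`; it is `0` if `L` has fewer than `k`
elements. -/
def maxSum (L : Finset ℕ) (k : ℕ) : ℕ :=
  (L.powersetCard k).sup fun s => ∑ i ∈ s, i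

theorem sum_le_maxSum (hs : s ⊆ L) : ∑ i ∈ s, i ≤ maxSum L s.card :=
  Finset.le_sup (f := fun s => ∑ i ∈ s, i) (Finset.mem_powersetCard.2 ⟨hs, rfl⟩)

theorem exists_sum_eq_maxSum {k : ℕ} (hk : k ≤ L.card) :
    ∃ s ⊆ L, s.card = k ∧ ∑ i ∈ s, i = maxSum L k := by
  obtain ⟨s, hs, heq⟩ := Finset.exists_mem_eq_sup _ (Finset.powersetCard_nonempty.2 hk)
    fun s => ∑ i ∈ s, i
  exact ⟨s, (Finset.mem_powersetCard.1 hs).1, (Finset.mem_powersetCard.1 hs).2, heq.symm⟩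

theorem sum_lt_maxSum (hs : s ⊆ L) (ha : a ∈ s) (ha'L : a' ∈ L) (ha' : a' ∉ s) (hlt : a < a') :
    ∑ i ∈ s, i < maxSum L s.card := by
  have hexch := sum_insert_erase_add ha ha'
  have hle := sum_le_maxSum
    (Finset.insert_subset ha'L ((Finset.erase_subset a s).trans hs))
  rw [card_insert_erase_of_mem ha ha'] at hle
  lia

theorem sum_lt_maxSum_of_sum_eq_maxSum {B : Finset ℕ} (hB : B ⊆ L)
    (hmax : ∑ i ∈ B, i = maxSum L B.card) (hs : s ⊆ L) (ha : a ∈ s) (haB : a ∉ B) (ha'B : a' ∈ B)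
    (ha' : a' ∉ s) : ∑ i ∈ s, i < maxSum L s.card := by
  rcases lt_trichotomy a a' with hlt | rfl | hlt
  · exact sum_lt_maxSum hs ha (hB ha'B) ha' hlt
  · exact absurd ha ha'
  · exact absurd hmax (sum_lt_maxSum hB ha'B (hs ha) haB hlt).ne

theorem exists_subset_card_eq_add_sum_ne {k : ℕ} (hk : 0 < k) (hkL : k < L.card) (p q : ℕ) :
    ∃ s ⊆ L, s.card = k ∧ p + ∑ i ∈ s, i ≠ q := by
  obtain ⟨s, hs, rfl⟩ := Finset.exists_subset_card_eq hkL.le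
  obtain ⟨a, ha⟩ := Finset.card_pos.1 hk
  obtain ⟨a', ha'L, ha'⟩ := Finset.exists_mem_notMem_of_card_lt_card hkL
  by_cases hsum : p + ∑ i ∈ s, i = q
  · refine ⟨_, Finset.insert_subset ha'L ((Finset.erase_subset a s).trans hs),
      card_insert_erase_of_mem ha ha', ?_⟩
    have hexch := sum_insert_erase_add ha ha'
    have : a ≠ a' := ne_of_mem_of_not_mem ha ha'
    lia
  · exact ⟨s, hs, rfl, hsum⟩

end LabelSets

section DoubleStarSplit

/-- Label sets for a double star: the two centers have initial weights `p` and `r`, all leaves have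
initial weight `q`, the edge between the centers gets `l₀`, and the leaf edges at the two centers
get `M₁` and `M₂`. However `M₁` and `M₂` are distributed, adjacent vertices get distinct weights. -/
structure IsDoubleStarSplit (p r q l₀ : ℕ) (M₁ M₂ : Finset ℕ) : Prop where
  notMem_left : l₀ ∉ M₁
  notMem_right : l₀ ∉ M₂
  disjoint : Disjoint M₁ M₂
  left_ne : ∀ k ∈ M₁, p + (l₀ + ∑ i ∈ M₁, i) ≠ q + k
  right_ne : ∀ k ∈ M₂, r + (l₀ + ∑ i ∈ M₂, i) ≠ q + k
  center_ne : p + ∑ i ∈ M₁, i ≠ r + ∑ i ∈ M₂, i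

variable {p r q l₀ c l l' : ℕ} {L L₁ L₂ M₁ M₂ : Finset ℕ}

theorem IsDoubleStarSplit.symm (h : IsDoubleStarSplit p r q l₀ M₁ M₂) :
    IsDoubleStarSplit r p q l₀ M₂ M₁ :=
  ⟨h.notMem_right, h.notMem_left, h.disjoint.symm, h.right_ne, h.left_ne, h.center_ne.symm⟩

theorem isDoubleStarSplit_swap (hdisj : Disjoint L₁ L₂) (hp : p + ∑ i ∈ L₁, i = q)
    (hr : r + ∑ i ∈ L₂, i = q) (hl : l ∈ L₁) (hl' : l' ∈ L₂) (hc₁ : c ∉ L₁) (hc₂ : c ∉ L₂)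
    (hgap₁ : ∀ v ∈ L₁.erase l, v + l ≠ c + l') (hgap₂ : ∀ v ∈ L₂.erase l', v + l' ≠ c + l) :
    IsDoubleStarSplit p r q c (insert l' (L₁.erase l)) (insert l (L₂.erase l')) := by
  have hl₂ : l ∉ L₂ := Finset.disjoint_left.1 hdisj hl
  have hl'₁ : l' ∉ L₁ := Finset.disjoint_right.1 hdisj hl'
  have hsum₁ := sum_insert_erase_add hl hl'₁
  have hsum₂ := sum_insert_erase_add hl' hl₂
  have hne : l ≠ l' := fun h => hl₂ (h ▸ hl')
  have hcl : c ≠ l := fun h => hc₁ (h ▸ hl)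
  have hcl' : c ≠ l' := fun h => hc₂ (h ▸ hl')
  refine ⟨by simp [hcl', hc₁], by simp [hcl, hc₂], ?_, fun k hk => ?_, fun k hk => ?_, by lia⟩
  · rw [Finset.disjoint_left] at hdisj ⊢
    grind
  · rcases Finset.mem_insert.1 hk with rfl | hk
    · lia
    · have := hgap₁ k hk
      lia
  · rcases Finset.mem_insert.1 hk with rfl | hk
    · lia
    · have := hgap₂ k hk
      lia

theorem isDoubleStarSplit_rotate {v : ℕ} (hdisj : Disjoint L₁ L₂) (hp : p + ∑ i ∈ L₁, i = q)
    (hr : r + ∑ i ∈ L₂, i = q) (hl : l ∈ L₁) (hl' : l' ∈ L₂) (hc₁ : c ∉ L₁) (hc₂ : c ∉ L₂)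
    (hv : v ∈ L₁.erase l) (hgap : v + l = c + l') :
    IsDoubleStarSplit p r q l (insert c (insert l' (L₁.erase l) |>.erase v))
      (insert v (L₂.erase l')) := by
  have hvL₁ := Finset.mem_of_mem_erase hv
  have hl'₁ : l' ∉ L₁ := Finset.disjoint_right.1 hdisj hl'
  have hl₂ : l ∉ L₂ := Finset.disjoint_left.1 hdisj hl
  have hv₂ : v ∉ L₂ := Finset.disjoint_left.1 hdisj hvL₁
  have hcl' : c ≠ l' := fun h => hc₂ (h ▸ hl')
  have hcl : c ≠ l := fun h => hc₁ (h ▸ hl)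
  have hcM : c ∉ insert l' (L₁.erase l) := by simp [hcl', hc₁]
  have hsum₁ := sum_insert_erase_add hl hl'₁
  have hsum₁' := sum_insert_erase_add (Finset.mem_insert_of_mem hv) hcM
  have hsum₂ := sum_insert_erase_add hl' hv₂
  have hlM : l ∉ insert c ((insert l' (L₁.erase l)).erase v) := by grind
  have hcM₂ : c ∉ insert v (L₂.erase l') := by grind
  refine ⟨hlM, by grind, ?_, fun k hk => ?_, fun k hk => ?_, by grind⟩
  · rw [Finset.disjoint_left] at hdisj ⊢
    grind
  · have : k ≠ l := ne_of_mem_of_not_mem hk hlM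
    lia
  · have : k ≠ c := ne_of_mem_of_not_mem hk hcM₂
    lia

theorem exists_isDoubleStarSplit_of_rotate {v : ℕ} (hdisj : Disjoint L₁ L₂)
    (hp : p + ∑ i ∈ L₁, i = q) (hr : r + ∑ i ∈ L₂, i = q) (hl : l ∈ L₁) (hl' : l' ∈ L₂)
    (hc₁ : c ∉ L₁) (hc₂ : c ∉ L₂) (hL₁ : L₁ ⊆ L) (hL₂ : L₂ ⊆ L) (hc : c ∈ L)
    (hv : v ∈ L₁.erase l) (hgap : v + l = c + l') :
    ∃ l₀ ∈ L, ∃ M₁ ⊆ L, ∃ M₂ ⊆ L,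
      M₁.card = L₁.card ∧ M₂.card = L₂.card ∧ IsDoubleStarSplit p r q l₀ M₁ M₂ := by
  refine ⟨l, hL₁ hl, _, ?_, _, ?_, ?_, ?_,
    isDoubleStarSplit_rotate hdisj hp hr hl hl' hc₁ hc₂ hv hgap⟩
  · grind
  · grind
  · rw [card_insert_erase_of_mem (Finset.mem_insert_of_mem hv),
      card_insert_erase_of_mem hl (Finset.disjoint_right.1 hdisj hl')]
    have hcl' : c ≠ l' := fun h => hc₂ (h ▸ hl')
    simp [hcl', hc₁]
  · exact card_insert_erase_of_mem hl'
      (Finset.disjoint_left.1 hdisj (Finset.mem_of_mem_erase hv))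

-- Exchanging `l` and `l'` separates the weights of the two centers, but may create a new collision
-- `v + l = c + l'`; in that case the labels `l`, `l'`, `c`, `v` are redistributed.
theorem exists_isDoubleStarSplit_of_exact (hdisj : Disjoint L₁ L₂) (hp : p + ∑ i ∈ L₁, i = q)
    (hr : r + ∑ i ∈ L₂, i = q) (hne₁ : L₁.Nonempty) (hne₂ : L₂.Nonempty) (hc₁ : c ∉ L₁)
    (hc₂ : c ∉ L₂) (hL₁ : L₁ ⊆ L) (hL₂ : L₂ ⊆ L) (hc : c ∈ L) :
    ∃ l₀ ∈ L, ∃ M₁ ⊆ L, ∃ M₂ ⊆ L,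
      M₁.card = L₁.card ∧ M₂.card = L₂.card ∧ IsDoubleStarSplit p r q l₀ M₁ M₂ := by
  obtain ⟨l, hl⟩ := hne₁
  obtain ⟨l', hl'⟩ := hne₂
  by_cases hgap₁ : ∃ v ∈ L₁.erase l, v + l = c + l'
  · obtain ⟨v, hv, hgap⟩ := hgap₁
    exact exists_isDoubleStarSplit_of_rotate hdisj hp hr hl hl' hc₁ hc₂ hL₁ hL₂ hc hv hgap
  by_cases hgap₂ : ∃ v ∈ L₂.erase l', v + l' = c + l
  · obtain ⟨v, hv, hgap⟩ := hgap₂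
    obtain ⟨l₀, hl₀, M₂, hM₂, M₁, hM₁, hcard₂, hcard₁, hsplit⟩ :=
      exists_isDoubleStarSplit_of_rotate hdisj.symm hr hp hl' hl hc₂ hc₁ hL₂ hL₁ hc hv hgap
    exact ⟨l₀, hl₀, M₁, hM₁, M₂, hM₂, hcard₁, hcard₂, hsplit.symm⟩
  push Not at hgap₁ hgap₂
  exact ⟨c, hc, _, Finset.insert_subset (hL₂ hl') ((Finset.erase_subset _ _).trans hL₁), _,
    Finset.insert_subset (hL₁ hl) ((Finset.erase_subset _ _).trans hL₂),
    card_insert_erase_of_mem hl (Finset.disjoint_right.1 hdisj hl'),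
    card_insert_erase_of_mem hl' (Finset.disjoint_left.1 hdisj hl),
    isDoubleStarSplit_swap hdisj hp hr hl hl' hc₁ hc₂ hgap₁ hgap₂⟩

theorem isDoubleStarSplit_of_forall_ne (hp : p + ∑ i ∈ L₁, i = q) (hl₁ : l₀ ∉ L₁) (hl₂ : l₀ ∉ L₂)
    (hdisj : Disjoint L₁ L₂)
    (hr : ∀ M ⊆ insert l₀ L₂, M.card = L₂.card → r + ∑ i ∈ M, i ≠ q) :
    IsDoubleStarSplit p r q l₀ L₁ L₂ where
  notMem_left := hl₁
  notMem_right := hl₂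
  disjoint := hdisj
  left_ne k hk := by
    have : k ≠ l₀ := ne_of_mem_of_not_mem hk hl₁
    lia
  right_ne k hk heq := by
    refine hr (insert l₀ (L₂.erase k)) (Finset.insert_subset_insert _ (Finset.erase_subset _ _))
      (card_insert_erase_of_mem hk hl₂) ?_
    have := sum_insert_erase_add hk hl₂
    lia
  center_ne := by
    have := hr L₂ (Finset.subset_insert _ _) rfl
    lia

theorem exists_isDoubleStarSplit (hL₁ : L₁ ⊆ L) (hne : L₁.Nonempty) (hp : p + ∑ i ∈ L₁, i = q)
    {e : ℕ} (he : 0 < e) (hcard : L₁.card + e + 1 ≤ L.card) :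
    ∃ l₀ ∈ L, ∃ M₁ ⊆ L, ∃ M₂ ⊆ L,
      M₁.card = L₁.card ∧ M₂.card = e ∧ IsDoubleStarSplit p r q l₀ M₁ M₂ := by
  have hsdiff : e + 1 ≤ (L \ L₁).card := by
    rw [Finset.card_sdiff_of_subset hL₁]
    lia
  by_cases hr : ∃ L₂ ⊆ L \ L₁, L₂.card = e ∧ r + ∑ i ∈ L₂, i = q
  · obtain ⟨L₂, hL₂, rfl, hr⟩ := hr
    obtain ⟨c, hc, hc₂⟩ := Finset.exists_mem_notMem_of_card_lt_card (Nat.lt_of_succ_le hsdiff)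
    rw [Finset.mem_sdiff] at hc
    exact exists_isDoubleStarSplit_of_exact
      (Finset.disjoint_sdiff.mono_right hL₂) hp hr hne (Finset.card_pos.1 he) hc.2 hc₂ hL₁
      (hL₂.trans Finset.sdiff_subset) hc.1
  · push Not at hr
    obtain ⟨N, hN, hNcard⟩ := Finset.exists_subset_card_eq hsdiff
    obtain ⟨l₀, hl₀⟩ := Finset.card_pos.1 (hNcard ▸ Nat.succ_pos e : 0 < N.card)
    have hcard₂ : (N.erase l₀).card = e := by rw [Finset.card_erase_of_mem hl₀, hNcard]; rfl
    have hsub : insert l₀ (N.erase l₀) ⊆ L \ L₁ := by rwa [Finset.insert_erase hl₀]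
    have hl₀L := Finset.mem_sdiff.1 (hN hl₀)
    have hNL := (Finset.erase_subset l₀ N).trans hN
    exact ⟨l₀, hl₀L.1, L₁, hL₁, N.erase l₀, hNL.trans Finset.sdiff_subset, rfl, hcard₂,
      isDoubleStarSplit_of_forall_ne hp hl₀L.2 (Finset.notMem_erase _ _)
        (Finset.disjoint_sdiff.mono_right hNL)
        fun M hM hMcard => hr M (hM.trans hsub) (hMcard.trans hcard₂)⟩

end DoubleStarSplit

section LocalSearch

theorem exists_forall_not_of_improve {S ι : Type*} [Finite ι] {P : S → Prop} {bad : S → ι → Prop}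
    (improve : ∀ s, P s → ∀ x, bad s x → ∃ s', P s' ∧ ¬ bad s' x ∧ ∀ y, bad s' y → bad s y)
    {s : S} (hs : P s) : ∃ s', P s' ∧ ∀ x, ¬ bad s' x := by
  induction h : {x | bad s x}.ncard using Nat.strong_induction_on generalizing s with
  | _ n ih =>
    by_cases! hbad : ∃ x, bad s x
    · obtain ⟨x, hx⟩ := hbad
      obtain ⟨s', hs', hx', hsub⟩ := improve s hs x hx
      exact ih _ (h ▸ Set.ncard_lt_ncard (Set.ssubset_iff_exists.2 ⟨hsub, x, hx, hx'⟩)) hs' rfl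
    · exact ⟨s, hs, hbad⟩

theorem exists_bijOn_coe_finset {α : Type*} {A : Set α} (hA : A.Finite) {M : Finset ℕ}
    (hcard : A.ncard = M.card) : ∃ g : α → ℕ, Set.BijOn g A M :=
  hA.exists_bijOn_of_encard_eq
    (by rw [← hA.cast_ncard_eq, hcard, Set.encard_coe_eq_coe_finsetCard])

theorem exists_subset_bijOn {α : Type*} {A : Set α} {L : Finset ℕ} {f : α → ℕ}
    (hinj : Set.InjOn f A) (hmaps : Set.MapsTo f A L) : ∃ s ⊆ L, Set.BijOn f A s := by
  lift f '' A to Finset ℕ using L.finite_toSet.subset hmaps.image_subset with s hs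
  exact ⟨s, Finset.coe_subset.1 (hs ▸ hmaps.image_subset), hs ▸ hinj.bijOn_image⟩

theorem card_eq_ncard_of_bijOn {α : Type*} {A : Set α} {f : α → ℕ} {M : Finset ℕ}
    (hf : Set.BijOn f A M) : M.card = A.ncard := by
  rw [← Set.ncard_coe_finset, ← hf.image_eq, hf.injOn.ncard_image]

theorem exists_bijOn_forall_not {α : Type*} {A : Set α} (hA : A.Finite) {M : Finset ℕ}
    (hcard : A.ncard = M.card) {bad : α → ℕ → Prop}
    (bad_unique : ∀ a ∈ A, ∀ i j, bad a i → bad a j → i = j)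
    (exists_good : ∀ i ∈ M, ∃ a ∈ A, ¬ bad a i) :
    ∃ g : α → ℕ, Set.BijOn g A M ∧ ∀ a ∈ A, ¬ bad a (g a) := by
  classical
  have : Finite A := hA
  have improve : ∀ g : α → ℕ, Set.BijOn g A M → ∀ a : A, bad a (g a) →
      ∃ g' : α → ℕ, Set.BijOn g' A M ∧ ¬ bad a (g' a) ∧ ∀ y : A, bad y (g' y) → bad y (g y) := by
    rintro g hg ⟨a, ha⟩ hbad
    obtain ⟨a', ha', hgood⟩ := exists_good (g a) (hg.mapsTo ha)
    have hne : a' ≠ a := fun h => hgood (h ▸ hbad)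
    refine ⟨g ∘ Equiv.swap a a', hg.comp (Equiv.swap_bijOn_self (iff_of_true ha ha')), ?_, ?_⟩
    · simp only [Function.comp_apply, Equiv.swap_apply_left]
      exact fun hbad' => hne (hg.injOn ha' ha (bad_unique a ha _ _ hbad' hbad))
    · rintro ⟨y, hy⟩ hbad'
      by_cases hya : y = a
      · exact hya ▸ hbad
      by_cases hya' : y = a'
      · subst hya'
        simp_all
      · rwa [Function.comp_apply, Equiv.swap_apply_of_ne_of_ne hya hya'] at hbad'
  obtain ⟨g₀, hg₀⟩ := exists_bijOn_coe_finset hA hcard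
  obtain ⟨g, hg, hgood⟩ := exists_forall_not_of_improve improve hg₀
  exact ⟨g, hg, fun a ha => hgood ⟨a, ha⟩⟩

end LocalSearch

section VertexSum

variable {V : Type*} {H K : SimpleGraph V} {f g : Sym2 V → ℕ} {v y : V}

theorem finsum_mem_eq_sum_of_bijOn {α : Type*} {A : Set α} {g : α → ℕ} {M : Finset ℕ}
    (hg : Set.BijOn g A M) : ∑ᶠ a ∈ A, g a = ∑ i ∈ M, i :=
  (finsum_mem_eq_of_bijOn g hg fun _ _ => rfl).trans (finsum_mem_coe_finset id M)

theorem vertexSum_eq_zero (hv : ∀ w, ¬ H.Adj v w) : vertexSum H f v = 0 := by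
  have hempty : H.incidenceSet v = ∅ := Set.eq_empty_of_forall_notMem fun e he => by
    obtain ⟨w, rfl⟩ := Sym2.mem_iff_exists.1 he.2
    exact hv w he.1
  rw [vertexSum, hempty, finsum_mem_empty]

theorem vertexSum_eq_of_forall_adj_eq (hyv : H.Adj y v) (hv : ∀ w, H.Adj v w → w = y) :
    vertexSum H f v = f s(y, v) := by
  have hsingle : H.incidenceSet v = {s(y, v)} := by
    refine Set.eq_singleton_iff_unique_mem.2 ⟨⟨hyv, Sym2.mem_mk_right y v⟩, fun e he => ?_⟩
    obtain ⟨w, rfl⟩ := Sym2.mem_iff_exists.1 he.2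
    rw [hv w he.1, Sym2.eq_swap]
  rw [vertexSum, hsingle, finsum_mem_singleton]

theorem vertexSum_congr (hfg : Set.EqOn f g H.edgeSet) (v : V) :
    vertexSum H f v = vertexSum H g v :=
  finsum_mem_congr rfl fun _ he => hfg he.1

theorem vertexSum_add_vertexSum_sdiff [Finite V] (hKH : K ≤ H) (f : Sym2 V → ℕ) (v : V) :
    vertexSum K f v + vertexSum (H \ K) f v = vertexSum H f v := by
  have hunion : H.incidenceSet v = K.incidenceSet v ∪ (H \ K).incidenceSet v := by
    ext e
    have := @SimpleGraph.edgeSet_mono _ _ _ hKH e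
    simp only [SimpleGraph.incidenceSet, SimpleGraph.edgeSet_sdiff, Set.mem_union, Set.mem_sdiff,
      Set.mem_ofPred_eq]
    tauto
  rw [vertexSum, vertexSum, vertexSum, hunion, finsum_mem_union _ (Set.toFinite _) (Set.toFinite _)]
  refine Set.disjoint_left.2 fun e heK heH => ?_
  have := heH.1
  rw [SimpleGraph.edgeSet_sdiff] at this
  exact this.2 heK.1

theorem ncard_incidenceSet (H : SimpleGraph V) (v : V) :
    (H.incidenceSet v).ncard = (H.neighborSet v).ncard := by
  classical
  exact Nat.card_congr (H.incidenceSetEquivNeighborSet v)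

end VertexSum

section WeightedAntimagic

variable {V : Type*} {H K : SimpleGraph V} {b : V → ℕ} {L M : Finset ℕ} {f₀ : Sym2 V → ℕ}
  {x : V} {β : ℕ}

/-- `f` labels the edges of `H` injectively from `L` so that adjacent vertices get distinct total
weights, where the total weight of `v` is its initial weight `b v` plus its induced sum. -/
structure IsWeightedAntimagic (H : SimpleGraph V) (b : V → ℕ) (L : Finset ℕ) (f : Sym2 V → ℕ) :
    Prop where
  injOn : Set.InjOn f H.edgeSet
  mapsTo : Set.MapsTo f H.edgeSet L
  ne : ∀ ⦃u v⦄, H.Adj u v → b u + vertexSum H f u ≠ b v + vertexSum H f v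

/-- The component of `x` in `H` is a star with at least one edge and center `x`. Both ends of an
isolated edge are star centers. -/
structure IsStarCenter (H : SimpleGraph V) (x : V) : Prop where
  exists_adj : ∃ y, H.Adj x y
  eq_of_adj : ∀ ⦃y⦄, H.Adj x y → ∀ ⦃w⦄, H.Adj y w → w = x

/-- A star component with center `x` all of whose leaves have the same initial weight `β`; in an
isolated edge both ends count as leaves. Such a component may be impossible to label. -/
structure IsTiedStar (H : SimpleGraph V) (b : V → ℕ) (x : V) (β : ℕ) : Prop
    extends IsStarCenter H x where
  leaf_eq : ∀ ⦃y⦄, H.Adj x y → b y = β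
  center_eq : (H.neighborSet x).Subsingleton → b x = β

/-- No component of `H` is a tied star, the only obstruction to a weighted antimagic labelling. -/
def IsTieFree (H : SimpleGraph V) (b : V → ℕ) : Prop :=
  ∀ x β, ¬ IsTiedStar H b x β

/-- Every tie-free initial weight function on `H` and every large enough set of labels admit a
weighted antimagic labelling. This is the induction hypothesis of the existence proof. -/
def IsLabelable (H : SimpleGraph V) : Prop :=
  ∀ (b : V → ℕ) (L : Finset ℕ), IsTieFree H b → H.edgeSet.ncard ≤ L.card →
    ∃ f, IsWeightedAntimagic H b L f

theorem exists_isWeightedAntimagic_of_sdiff [Finite V] (hKH : K ≤ H) (hK : K ≠ ⊥)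
    (ih : ∀ H' < H, IsLabelable H') (hL : H.edgeSet.ncard ≤ L.card) (hML : M ⊆ L)
    (hf₀ : Set.BijOn f₀ K.edgeSet M)
    (hfree : IsTieFree (H \ K) fun v => b v + vertexSum K f₀ v)
    (hne : ∀ f : Sym2 V → ℕ, Set.EqOn f f₀ K.edgeSet → Set.InjOn f H.edgeSet →
      Set.MapsTo f H.edgeSet L →
      ∀ p q, K.Adj p q → b p + vertexSum H f p ≠ b q + vertexSum H f q) :
    ∃ f, IsWeightedAntimagic H b L f := by
  classical
  have hcardM := card_eq_ncard_of_bijOn hf₀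
  obtain ⟨f₁, hf₁⟩ := ih (H \ K) (sdiff_lt hKH hK) _ (L \ M) hfree (by
    rw [SimpleGraph.edgeSet_sdiff, Set.ncard_sdiff (SimpleGraph.edgeSet_mono hKH),
      Finset.card_sdiff_of_subset hML]
    lia)
  have hunion : H.edgeSet = K.edgeSet ∪ (H \ K).edgeSet := by
    rw [SimpleGraph.edgeSet_sdiff, Set.union_sdiff_cancel (SimpleGraph.edgeSet_mono hKH)]
  have hdisj : Disjoint K.edgeSet (H \ K).edgeSet :=
    SimpleGraph.edgeSet_sdiff H K ▸ Set.disjoint_sdiff_right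
  have heq₀ : Set.EqOn (K.edgeSet.piecewise f₀ f₁) f₀ K.edgeSet := Set.piecewise_eqOn _ _ _
  have heq₁ : Set.EqOn (K.edgeSet.piecewise f₀ f₁) f₁ (H \ K).edgeSet :=
    (Set.piecewise_eqOn_compl _ _ _).mono hdisj.subset_compl_left
  have hinj : Set.InjOn (K.edgeSet.piecewise f₀ f₁) H.edgeSet := by
    rw [hunion, Set.injOn_union hdisj]
    refine ⟨hf₀.injOn.congr heq₀.symm, hf₁.injOn.congr heq₁.symm, fun e he e' he' h => ?_⟩
    rw [heq₀ he, heq₁ he'] at h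
    exact (Finset.mem_sdiff.1 (hf₁.mapsTo he')).2 (h ▸ hf₀.mapsTo he)
  have hmaps : Set.MapsTo (K.edgeSet.piecewise f₀ f₁) H.edgeSet L := by
    rw [hunion, Set.mapsTo_union]
    exact ⟨fun e he => heq₀ he ▸ hML (hf₀.mapsTo he),
      fun e he => heq₁ he ▸ Finset.sdiff_subset (hf₁.mapsTo he)⟩
  refine ⟨_, hinj, hmaps, fun p q hpq => ?_⟩
  by_cases hKpq : K.Adj p q
  · exact hne _ heq₀ hinj hmaps p q hKpq
  · have := hf₁.ne (u := p) (v := q) ⟨hpq, hKpq⟩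
    rw [← vertexSum_add_vertexSum_sdiff hKH, ← vertexSum_add_vertexSum_sdiff hKH,
      vertexSum_congr heq₀, vertexSum_congr heq₁, vertexSum_congr heq₀, vertexSum_congr heq₁]
    lia

theorem IsTiedStar.of_sdiff (h : IsTiedStar (H \ K) (fun v => b v + vertexSum K f₀ v) x β)
    (hx : ∀ w, ¬ K.Adj x w) (hadj : ∀ ⦃y⦄, H.Adj x y → ∀ w, ¬ K.Adj y w) :
    IsTiedStar H b x β := by
  have hH : ∀ y, (H \ K).Adj x y ↔ H.Adj x y := fun y => and_iff_left (hx y)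
  have hb : ∀ v, (∀ w, ¬ K.Adj v w) → b v + vertexSum K f₀ v = b v :=
    fun v hv => by rw [vertexSum_eq_zero hv, add_zero]
  refine ⟨⟨h.exists_adj.imp fun y => (hH y).1, fun y hy w hw =>
    h.eq_of_adj ((hH y).2 hy) ⟨hw, hadj hy w⟩⟩, fun y hy => ?_, fun hsub => ?_⟩
  · rw [← hb y (hadj hy), h.leaf_eq ((hH y).2 hy)]
  · rw [← hb x hx]
    exact h.center_eq (hsub.anti fun y => (hH y).1)

theorem IsTieFree.sdiff (hfree : IsTieFree H b)
    (hK : ∀ ⦃v w⦄, K.Adj v w → ∀ y, ¬ (H \ K).Adj v y) :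
    IsTieFree (H \ K) fun v => b v + vertexSum K f₀ v := by
  intro x β h
  obtain ⟨y, hy⟩ := h.exists_adj
  have hx : ∀ w, ¬ K.Adj x w := fun w hw => hK hw y hy
  exact hfree x β (h.of_sdiff hx fun z hz w hw => hK hw x ⟨hz.symm, fun hK' => hx z hK'.symm⟩)

end WeightedAntimagic

section PartialStar

variable {V : Type*} {H : SimpleGraph V} {A : Set V} {x a v p q : V} {f : Sym2 V → ℕ}
  {M : Finset ℕ}

/-- The subgraph of `H` formed by the edges joining `x` to an element of `A`. -/
def partialStar (H : SimpleGraph V) (x : V) (A : Set V) : SimpleGraph V where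
  Adj p q := H.Adj p q ∧ (p = x ∧ q ∈ A ∨ q = x ∧ p ∈ A)
  symm := ⟨fun _ _ h => ⟨h.1.symm, h.2.symm⟩⟩
  loopless := ⟨fun _ h => H.irrefl h.1⟩

theorem partialStar_adj :
    (partialStar H x A).Adj p q ↔ H.Adj p q ∧ (p = x ∧ q ∈ A ∨ q = x ∧ p ∈ A) :=
  Iff.rfl

theorem partialStar_le : partialStar H x A ≤ H :=
  fun _ _ h => h.1

theorem partialStar_adj_of_ne (hvx : v ≠ x) :
    (partialStar H x A).Adj v q ↔ H.Adj v q ∧ q = x ∧ v ∈ A := by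
  simp [partialStar_adj, hvx]

theorem mem_edgeSet_partialStar {e : Sym2 V} :
    e ∈ (partialStar H x A).edgeSet ↔ ∃ a ∈ A, H.Adj x a ∧ e = s(x, a) := by
  induction e with
  | _ p q =>
    simp only [SimpleGraph.mem_edgeSet, partialStar_adj, Sym2.eq_iff]
    constructor
    · rintro ⟨hpq, ⟨rfl, hq⟩ | ⟨rfl, hp⟩⟩
      · exact ⟨q, hq, hpq, .inl ⟨rfl, rfl⟩⟩
      · exact ⟨p, hp, hpq.symm, .inr ⟨rfl, rfl⟩⟩
    · rintro ⟨a, ha, hxa, ⟨rfl, rfl⟩ | ⟨rfl, rfl⟩⟩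
      · exact ⟨hxa, .inl ⟨rfl, ha⟩⟩
      · exact ⟨hxa.symm, .inr ⟨rfl, ha⟩⟩

theorem edgeSet_partialStar_univ : (partialStar H x Set.univ).edgeSet = H.incidenceSet x := by
  ext e
  rw [mem_edgeSet_partialStar]
  constructor
  · rintro ⟨a, -, hxa, rfl⟩
    exact ⟨hxa, Sym2.mem_mk_left x a⟩
  · rintro ⟨he, hxe⟩
    obtain ⟨a, rfl⟩ := Sym2.mem_iff_exists.1 hxe
    exact ⟨a, trivial, he, rfl⟩

theorem vertexSum_partialStar_center (hf : Set.BijOn f (partialStar H x A).edgeSet M) :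
    vertexSum (partialStar H x A) f x = ∑ i ∈ M, i := by
  have hinc : (partialStar H x A).incidenceSet x = (partialStar H x A).edgeSet := by
    refine (SimpleGraph.incidenceSet_subset _ _).antisymm fun e he => ⟨he, ?_⟩
    obtain ⟨a, -, -, rfl⟩ := mem_edgeSet_partialStar.1 he
    exact Sym2.mem_mk_left x a
  exact finsum_mem_eq_sum_of_bijOn (hinc ▸ hf)

theorem vertexSum_partialStar_leaf (hxa : H.Adj x a) (ha : a ∈ A) :
    vertexSum (partialStar H x A) f a = f s(x, a) := by
  have hax : a ≠ x := hxa.ne'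
  exact vertexSum_eq_of_forall_adj_eq ⟨hxa, .inl ⟨rfl, ha⟩⟩
    fun w hw => ((partialStar_adj_of_ne hax).1 hw).2.1

end PartialStar

section StarStep

variable {V : Type*} [Finite V] {H : SimpleGraph V} {b : V → ℕ} {L M : Finset ℕ}
  {x : V}

theorem IsStarCenter.exists_bijOn (hx : IsStarCenter H x) (hfree : IsTieFree H b)
    (hM : (H.incidenceSet x).ncard = M.card) :
    ∃ f₀ : Sym2 V → ℕ, Set.BijOn f₀ (H.incidenceSet x) M ∧
      ∀ a, H.Adj x a → b x + ∑ i ∈ M, i ≠ b a + f₀ s(x, a) := by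
  have bad_unique : ∀ e ∈ H.incidenceSet x, ∀ i j,
      (∃ a, e = s(x, a) ∧ b x + ∑ i ∈ M, i = b a + i) →
      (∃ a, e = s(x, a) ∧ b x + ∑ i ∈ M, i = b a + j) → i = j := by
    rintro e - i j ⟨a, rfl, hi⟩ ⟨a', ha', hj⟩
    rw [Sym2.congr_right] at ha'
    subst ha'
    lia
  have exists_good : ∀ i ∈ M, ∃ e ∈ H.incidenceSet x,
      ¬ ∃ a, e = s(x, a) ∧ b x + ∑ i ∈ M, i = b a + i := by
    intro i hi
    by_contra! hbad
    have hleaf : ∀ a, H.Adj x a → b x + ∑ i ∈ M, i = b a + i := fun a ha => by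
      obtain ⟨a', haa', heq⟩ := hbad s(x, a) ((H.mem_incidenceSet x a).2 ha)
      rwa [Sym2.congr_right.1 haa']
    refine hfree x (b x + ∑ i ∈ M, i - i) ⟨hx, fun a ha => ?_, fun hsub => ?_⟩
    · rw [hleaf a ha, Nat.add_sub_cancel]
    · have hcard : M.card ≤ 1 := by
        rw [← hM, ncard_incidenceSet, Set.ncard_le_one_iff_subsingleton]
        exact hsub
      have hMi : M = {i} := Finset.eq_singleton_iff_unique_mem.2
        ⟨hi, fun j hj => Finset.card_le_one.1 hcard j hj i hi⟩
      rw [hMi, Finset.sum_singleton, Nat.add_sub_cancel]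
  obtain ⟨f₀, hf₀, hgood⟩ :=
    exists_bijOn_forall_not (Set.toFinite _) hM bad_unique exists_good
  exact ⟨f₀, hf₀, fun a ha heq =>
    hgood s(x, a) ((H.mem_incidenceSet x a).2 ha) ⟨a, rfl, heq⟩⟩

theorem IsStarCenter.exists_isWeightedAntimagic (hx : IsStarCenter H x) (hfree : IsTieFree H b)
    (ih : ∀ H' < H, IsLabelable H') (hL : H.edgeSet.ncard ≤ L.card) :
    ∃ f, IsWeightedAntimagic H b L f := by
  obtain ⟨y, hy⟩ := hx.exists_adj
  obtain ⟨M, hML, hM⟩ := Finset.exists_subset_card_eq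
    ((Set.ncard_le_ncard (H.incidenceSet_subset x) (Set.toFinite _)).trans hL)
  obtain ⟨f₀, hf₀, hgood⟩ := hx.exists_bijOn hfree hM.symm
  have hK : ∀ {p q}, (partialStar H x Set.univ).Adj p q ↔ H.Adj p q ∧ (p = x ∨ q = x) := by
    simp [partialStar_adj]
  refine exists_isWeightedAntimagic_of_sdiff (K := partialStar H x Set.univ) partialStar_le
    (SimpleGraph.ne_bot_iff_exists_adj.2 ⟨x, y, hK.2 ⟨hy, .inl rfl⟩⟩) ih hL hML
    (edgeSet_partialStar_univ ▸ hf₀) (hfree.sdiff ?_) ?_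
  · rintro v w hKvw z ⟨hvz, hvz'⟩
    obtain ⟨hvw, rfl | rfl⟩ := hK.1 hKvw
    · exact hvz' (hK.2 ⟨hvz, .inl rfl⟩)
    · exact hvz' (hK.2 ⟨hvz, .inr (hx.eq_of_adj hvw.symm hvz)⟩)
  · intro f heq _ _ p q hKpq
    rw [edgeSet_partialStar_univ] at heq
    have hne : ∀ a, H.Adj x a → b x + vertexSum H f x ≠ b a + vertexSum H f a := fun a ha => by
      rw [vertexSum, finsum_mem_eq_sum_of_bijOn (hf₀.congr heq.symm),
        vertexSum_eq_of_forall_adj_eq ha (hx.eq_of_adj ha),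
        heq ((H.mem_incidenceSet x a).2 ha)]
      exact hgood a ha
    obtain ⟨hpq, rfl | rfl⟩ := hK.1 hKpq
    · exact hne q hpq
    · exact (hne p hpq.symm).symm

end StarStep

section Broom

variable {V : Type*} {H : SimpleGraph V} {b : V → ℕ} {L M : Finset ℕ}
  {f f₀ : Sym2 V → ℕ} {x u z : V} {β : ℕ}

/-- The neighbours of `x` are `u`, which has a further neighbour, and at least one leaf, and all
leaves at `x` have the same initial weight `β`. -/
structure IsTiedBroom (H : SimpleGraph V) (b : V → ℕ) (x u : V) (β : ℕ) : Prop where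
  adj : H.Adj x u
  exists_leaf : ∃ a, H.Adj x a ∧ a ≠ u
  eq_of_adj : ∀ ⦃a⦄, H.Adj x a → a ≠ u → ∀ ⦃w⦄, H.Adj a w → w = x
  leaf_eq : ∀ ⦃a⦄, H.Adj x a → a ≠ u → b a = β
  exists_adj : ∃ z, H.Adj u z ∧ z ≠ x

theorem IsTiedBroom.not_adj (h : IsTiedBroom H b x u β) (hz : H.Adj u z) : ¬ H.Adj x z :=
  fun hxz => h.adj.ne' (h.eq_of_adj hxz hz.ne' hz.symm)

theorem IsTiedBroom.isTieFree_sdiff (h : IsTiedBroom H b x u β) (hfree : IsTieFree H b)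
    (hf₀ : Set.BijOn f₀ (partialStar H x {u}ᶜ).edgeSet M) (hz : H.Adj u z) (hzx : z ≠ x)
    (hzu : (∃ w, H.Adj z w ∧ w ≠ u) ∨ b x + ∑ i ∈ M, i ≠ b z) :
    IsTieFree (H \ partialStar H x {u}ᶜ) fun v => b v + vertexSum (partialStar H x {u}ᶜ) f₀ v := by
  have hux : u ≠ x := h.adj.ne'
  have hzK : ∀ w, ¬ (partialStar H x {u}ᶜ).Adj z w := fun w hw =>
    have hw := (partialStar_adj_of_ne hzx).1 hw
    h.not_adj hz (hw.2.1 ▸ hw.1.symm)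
  have huK : ∀ w, ¬ (partialStar H x {u}ᶜ).Adj u w := fun w hw =>
    ((partialStar_adj_of_ne hux).1 hw).2.2 rfl
  intro y β' ht
  rcases eq_or_ne y u with rfl | hyu
  · have hx := ht.leaf_eq ⟨h.adj.symm, huK x⟩
    have hz' := ht.leaf_eq ⟨hz, huK z⟩
    simp only [vertexSum_partialStar_center hf₀, vertexSum_eq_zero hzK, add_zero] at hx hz'
    rcases hzu with ⟨w, hw, hwu⟩ | hne
    · exact hwu (ht.eq_of_adj ⟨hz, huK z⟩ ⟨hw, hzK w⟩)
    · exact hne (hx.trans hz'.symm)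
  rcases eq_or_ne y x with rfl | hyx
  · exact hzx (ht.eq_of_adj ⟨h.adj, fun hK => huK y hK.symm⟩ ⟨hz, huK z⟩)
  by_cases hxy : H.Adj x y
  · obtain ⟨w, hyw, hw⟩ := ht.exists_adj
    exact hw ⟨hyw, .inr ⟨h.eq_of_adj hxy hyu hyw, hyu⟩⟩
  · refine hfree y β' (ht.of_sdiff (fun w hw => ?_) fun t hyt w hw => ?_)
    · have hw := (partialStar_adj_of_ne hyx).1 hw
      exact hxy (hw.2.1 ▸ hw.1.symm)
    · have hw := (partialStar_adj_of_ne fun htx => hxy (htx ▸ hyt).symm).1 hw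
      exact hyx (h.eq_of_adj (hw.2.1 ▸ hw.1.symm) hw.2.2 hyt.symm)

theorem edgeSet_partialStar_compl_singleton :
    (partialStar H x {u}ᶜ).edgeSet = H.incidenceSet x \ {s(x, u)} := by
  ext e
  rw [mem_edgeSet_partialStar, ← edgeSet_partialStar_univ, Set.mem_sdiff, mem_edgeSet_partialStar]
  constructor
  · rintro ⟨a, ha, hxa, rfl⟩
    exact ⟨⟨a, trivial, hxa, rfl⟩, fun h => ha (Sym2.congr_right.1 h)⟩
  · rintro ⟨⟨a, -, hxa, rfl⟩, ha⟩
    exact ⟨a, fun h => ha (congrArg _ h), hxa, rfl⟩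

theorem insert_edgeSet_partialStar_compl_singleton (hxu : H.Adj x u) :
    insert s(x, u) (partialStar H x {u}ᶜ).edgeSet = H.incidenceSet x := by
  rw [edgeSet_partialStar_compl_singleton, Set.insert_sdiff_singleton,
    Set.insert_eq_of_mem ((H.mem_incidenceSet x u).2 hxu)]

theorem notMem_edgeSet_partialStar_compl_singleton :
    s(x, u) ∉ (partialStar H x {u}ᶜ).edgeSet := by
  simp [edgeSet_partialStar_compl_singleton]

theorem vertexSum_eq_add_sum_of_bijOn [Finite V] (hxu : H.Adj x u)
    (hf : Set.BijOn f (partialStar H x {u}ᶜ).edgeSet M) :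
    vertexSum H f x = f s(x, u) + ∑ i ∈ M, i := by
  rw [vertexSum, ← insert_edgeSet_partialStar_compl_singleton hxu,
    finsum_mem_insert _ notMem_edgeSet_partialStar_compl_singleton (Set.toFinite _),
    finsum_mem_eq_sum_of_bijOn hf]

theorem IsTiedBroom.exists_isWeightedAntimagic_of_subset [Finite V] (h : IsTiedBroom H b x u β)
    (hfree : IsTieFree H b) (ih : ∀ H' < H, IsLabelable H') (hL : H.edgeSet.ncard ≤ L.card)
    (hML : M ⊆ L) (hM : M.card = (partialStar H x {u}ᶜ).edgeSet.ncard)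
    (hexact : b x + ∑ i ∈ M, i = β ∨ ∀ N ⊆ L, N.card = M.card → b x + ∑ i ∈ N, i ≠ β)
    (hz : H.Adj u z) (hzx : z ≠ x) (hzu : (∃ w, H.Adj z w ∧ w ≠ u) ∨ b x + ∑ i ∈ M, i ≠ b z) :
    ∃ f, IsWeightedAntimagic H b L f := by
  obtain ⟨a, ha, hau⟩ := h.exists_leaf
  obtain ⟨f₀, hf₀⟩ := exists_bijOn_coe_finset (Set.toFinite _) hM.symm
  refine exists_isWeightedAntimagic_of_sdiff partialStar_le
    (SimpleGraph.ne_bot_iff_exists_adj.2 ⟨x, a, ha, .inl ⟨rfl, hau⟩⟩) ih hL hML hf₀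
    (h.isTieFree_sdiff hfree hf₀ hz hzx hzu) fun f heq hinj hmaps p q hpq => ?_
  have hf := hf₀.congr heq.symm
  have hfxu : f s(x, u) ∉ M := fun hmem => by
    obtain ⟨e, he, hefxu⟩ := hf.surjOn hmem
    have := hinj (SimpleGraph.edgeSet_mono partialStar_le he) h.adj hefxu
    exact notMem_edgeSet_partialStar_compl_singleton (this ▸ he)
  have hne : ∀ a, H.Adj x a → a ≠ u → b x + vertexSum H f x ≠ b a + vertexSum H f a := by
    intro a ha hau heqw
    have hfa : f s(x, a) ∈ M := hf.mapsTo (mem_edgeSet_partialStar.2 ⟨a, hau, ha, rfl⟩)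
    rw [vertexSum_eq_add_sum_of_bijOn h.adj hf, h.leaf_eq ha hau,
      vertexSum_eq_of_forall_adj_eq ha (h.eq_of_adj ha hau)] at heqw
    -- Equal weights at `x` and `a` would mean that, after exchanging the labels of `s(x, a)` and
    -- `s(x, u)`, the leaf edges bring `x` to weight `β` exactly.
    rcases hexact with hexact | hexact
    · have : f s(x, a) ≠ f s(x, u) := ne_of_mem_of_not_mem hfa hfxu
      lia
    · refine hexact (insert (f s(x, u)) (M.erase (f s(x, a)))) (Finset.insert_subset
        (hmaps h.adj) ((Finset.erase_subset _ _).trans hML)) (card_insert_erase_of_mem hfa hfxu) ?_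
      have := sum_insert_erase_add hfa hfxu
      lia
  obtain ⟨hpq, ⟨rfl, hq⟩ | ⟨rfl, hp⟩⟩ := hpq
  · exact hne q hpq hq
  · exact (hne p hpq.symm hp).symm

end Broom

section DoubleBroom

variable {V : Type*} {H : SimpleGraph V} {b : V → ℕ} {L M M₁ M₂ : Finset ℕ}
  {f : Sym2 V → ℕ} {x u : V} {β l₀ : ℕ}

theorem exists_bijOn_insert_union {α : Type*} {A₁ A₂ : Set α} {a : α} (hA₁ : A₁.Finite)
    (hA₂ : A₂.Finite) (hA : Disjoint A₁ A₂) (ha₁ : a ∉ A₁) (ha₂ : a ∉ A₂)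
    (hM : Disjoint M₁ M₂) (hl₁ : l₀ ∉ M₁) (hl₂ : l₀ ∉ M₂) (hcard₁ : A₁.ncard = M₁.card)
    (hcard₂ : A₂.ncard = M₂.card) :
    ∃ f : α → ℕ, f a = l₀ ∧ Set.BijOn f A₁ M₁ ∧ Set.BijOn f A₂ M₂ ∧
      Set.BijOn f (insert a (A₁ ∪ A₂)) (insert l₀ (M₁ ∪ M₂) : Finset ℕ) := by
  classical
  obtain ⟨g₁, hg₁⟩ := exists_bijOn_coe_finset hA₁ hcard₁
  obtain ⟨g₂, hg₂⟩ := exists_bijOn_coe_finset hA₂ hcard₂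
  let f := Function.update (A₁.piecewise g₁ g₂) a l₀
  have hf₁ : Set.BijOn f A₁ M₁ := hg₁.congr fun e he => by
    simp [f, Function.update_of_ne (ne_of_mem_of_not_mem he ha₁), he]
  have hf₂ : Set.BijOn f A₂ M₂ := hg₂.congr fun e he => by
    simp [f, Function.update_of_ne (ne_of_mem_of_not_mem he ha₂), hA.notMem_of_mem_right he]
  have hfa : f a = l₀ := Function.update_self _ _ _
  have hinj : Set.InjOn f (A₁ ∪ A₂) := (Set.injOn_union hA).2 ⟨hf₁.injOn, hf₂.injOn,
    fun e he e' he' heq =>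
      Finset.disjoint_left.1 hM (hf₁.mapsTo he) (heq ▸ hf₂.mapsTo he')⟩
  refine ⟨f, hfa, hf₁, hf₂, ?_⟩
  rw [Finset.coe_insert, Finset.coe_union, ← hfa]
  refine (hf₁.union hf₂ hinj).insert ?_
  rw [hfa, Set.mem_union, Finset.mem_coe, Finset.mem_coe]
  exact not_or.2 ⟨hl₁, hl₂⟩

theorem disjoint_edgeSet_partialStar_compl_singleton (hxu : x ≠ u) :
    Disjoint (partialStar H x {u}ᶜ).edgeSet (partialStar H u {x}ᶜ).edgeSet := by
  refine Set.disjoint_left.2 fun e he he' => ?_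
  obtain ⟨a, -, -, rfl⟩ := mem_edgeSet_partialStar.1 he
  obtain ⟨c, hc, -, heq⟩ := mem_edgeSet_partialStar.1 he'
  rcases Sym2.eq_iff.1 heq with ⟨h, -⟩ | ⟨h, -⟩
  · exact hxu h
  · exact hc h.symm

theorem edgeSet_partialStar_sup_partialStar (hxu : H.Adj x u) :
    (partialStar H x Set.univ ⊔ partialStar H u Set.univ).edgeSet =
      insert s(x, u) ((partialStar H x {u}ᶜ).edgeSet ∪ (partialStar H u {x}ᶜ).edgeSet) := by
  rw [SimpleGraph.edgeSet_sup, edgeSet_partialStar_univ, edgeSet_partialStar_univ,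
    ← insert_edgeSet_partialStar_compl_singleton hxu,
    ← insert_edgeSet_partialStar_compl_singleton hxu.symm, Sym2.eq_swap (a := u),
    Set.insert_union_distrib]

theorem IsTiedBroom.ne_of_mem [Finite V] (h : IsTiedBroom H b x u β)
    (hf : Set.BijOn f (partialStar H x {u}ᶜ).edgeSet M)
    (hM : ∀ k ∈ M, b x + (f s(x, u) + ∑ i ∈ M, i) ≠ β + k) {a : V} (ha : H.Adj x a)
    (hau : a ≠ u) : b x + vertexSum H f x ≠ b a + vertexSum H f a := by
  rw [vertexSum_eq_add_sum_of_bijOn h.adj hf, h.leaf_eq ha hau,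
    vertexSum_eq_of_forall_adj_eq ha (h.eq_of_adj ha hau)]
  exact hM _ (hf.mapsTo (mem_edgeSet_partialStar.2 ⟨a, hau, ha, rfl⟩))

theorem IsTiedBroom.ncard_edgeSet_pos [Finite V] (h : IsTiedBroom H b x u β) :
    0 < (partialStar H x {u}ᶜ).edgeSet.ncard := by
  obtain ⟨a, ha, hau⟩ := h.exists_leaf
  exact (Set.ncard_pos (Set.toFinite _)).2 ⟨_, mem_edgeSet_partialStar.2 ⟨a, hau, ha, rfl⟩⟩

theorem IsTiedBroom.exists_bijOn_of_symm [Finite V] (h : IsTiedBroom H b x u β)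
    (h' : IsTiedBroom H b u x β) (hL : H.edgeSet.ncard ≤ L.card) (hML : M ⊆ L)
    (hM : M.card = (partialStar H x {u}ᶜ).edgeSet.ncard) (hexact : b x + ∑ i ∈ M, i = β) :
    ∃ f : Sym2 V → ℕ, ∃ M₁ M₂ : Finset ℕ, Set.BijOn f (partialStar H x {u}ᶜ).edgeSet M₁ ∧
      Set.BijOn f (partialStar H u {x}ᶜ).edgeSet M₂ ∧
      IsDoubleStarSplit (b x) (b u) β (f s(x, u)) M₁ M₂ ∧
      ∃ N ⊆ L, Set.BijOn f (partialStar H x Set.univ ⊔ partialStar H u Set.univ).edgeSet N := by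
  have hdisj := disjoint_edgeSet_partialStar_compl_singleton (H := H) h.adj.ne
  have hxu₁ : s(x, u) ∉ (partialStar H x {u}ᶜ).edgeSet :=
    notMem_edgeSet_partialStar_compl_singleton
  have hxu₂ : s(x, u) ∉ (partialStar H u {x}ᶜ).edgeSet :=
    Sym2.eq_swap (a := u) ▸ notMem_edgeSet_partialStar_compl_singleton
  have hxu : s(x, u) ∉ (partialStar H x {u}ᶜ).edgeSet ∪ (partialStar H u {x}ᶜ).edgeSet :=
    not_or.2 ⟨hxu₁, hxu₂⟩
  have hcard : M.card + (partialStar H u {x}ᶜ).edgeSet.ncard + 1 ≤ L.card := by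
    rw [hM, ← Set.ncard_union_eq hdisj, ← Set.ncard_insert_of_notMem hxu,
      ← edgeSet_partialStar_sup_partialStar h.adj]
    exact (Set.ncard_le_ncard (SimpleGraph.edgeSet_mono (sup_le partialStar_le partialStar_le))
      (Set.toFinite _)).trans hL
  obtain ⟨l₀, hl₀, M₁, hM₁, M₂, hM₂, hcard₁, hcard₂, hsplit⟩ :=
    exists_isDoubleStarSplit (r := b u) hML (Finset.card_pos.1 (hM ▸ h.ncard_edgeSet_pos)) hexact
      h'.ncard_edgeSet_pos hcard
  obtain ⟨f, rfl, hf₁, hf₂, hf⟩ := exists_bijOn_insert_union (Set.toFinite _) (Set.toFinite _)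
    hdisj hxu₁ hxu₂ hsplit.disjoint hsplit.notMem_left hsplit.notMem_right
    (hM.symm.trans hcard₁.symm) hcard₂.symm
  exact ⟨f, M₁, M₂, hf₁, hf₂, hsplit, _, Finset.insert_subset hl₀ (Finset.union_subset hM₁ hM₂),
    edgeSet_partialStar_sup_partialStar h.adj ▸ hf⟩

theorem IsTiedBroom.exists_isWeightedAntimagic_of_symm [Finite V] (h : IsTiedBroom H b x u β)
    (h' : IsTiedBroom H b u x β) (hfree : IsTieFree H b) (ih : ∀ H' < H, IsLabelable H')
    (hL : H.edgeSet.ncard ≤ L.card) (hML : M ⊆ L)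
    (hM : M.card = (partialStar H x {u}ᶜ).edgeSet.ncard) (hexact : b x + ∑ i ∈ M, i = β) :
    ∃ f, IsWeightedAntimagic H b L f := by
  obtain ⟨f₀, M₁, M₂, hf₁, hf₂, hsplit, N, hN, hf₀⟩ := h.exists_bijOn_of_symm h' hL hML hM hexact
  have hK : ∀ {p q}, (partialStar H x Set.univ ⊔ partialStar H u Set.univ).Adj p q ↔
      H.Adj p q ∧ (p = x ∨ q = x ∨ p = u ∨ q = u) := by
    simp only [SimpleGraph.sup_adj, partialStar_adj, Set.mem_univ, and_true]
    tauto
  refine exists_isWeightedAntimagic_of_sdiff (sup_le partialStar_le partialStar_le)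
    (SimpleGraph.ne_bot_iff_exists_adj.2 ⟨x, u, hK.2 ⟨h.adj, .inl rfl⟩⟩) ih hL hN hf₀
    (hfree.sdiff ?_) ?_
  · rintro v w hvw y ⟨hvy, hy⟩
    rw [hK] at hvw hy
    have hx := @h.eq_of_adj v
    have hu := @h'.eq_of_adj v
    grind [SimpleGraph.Adj.symm]
  · intro f heq _ _ p q hpq
    rw [edgeSet_partialStar_sup_partialStar h.adj] at heq
    have heq₁ := heq.mono (Set.subset_union_left.trans (Set.subset_insert _ _))
    have heq₂ := heq.mono (Set.subset_union_right.trans (Set.subset_insert _ _))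
    have hx := fun a => h.ne_of_mem (a := a) (hf₁.congr heq₁.symm)
      (heq (Set.mem_insert _ _) ▸ hsplit.left_ne)
    have hu := fun a => h'.ne_of_mem (a := a) (hf₂.congr heq₂.symm)
      (Sym2.eq_swap (a := u) ▸ heq (Set.mem_insert _ _) ▸ hsplit.right_ne)
    have hxu : b x + vertexSum H f x ≠ b u + vertexSum H f u := by
      rw [vertexSum_eq_add_sum_of_bijOn h.adj (hf₁.congr heq₁.symm),
        vertexSum_eq_add_sum_of_bijOn h'.adj (hf₂.congr heq₂.symm), Sym2.eq_swap (a := u)]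
      have := hsplit.center_ne
      lia
    rw [hK] at hpq
    grind [SimpleGraph.Adj.symm]

theorem IsTiedBroom.exists_isWeightedAntimagic [Finite V] (h : IsTiedBroom H b x u β)
    (hfree : IsTieFree H b) (ih : ∀ H' < H, IsLabelable H') (hL : H.edgeSet.ncard ≤ L.card) :
    ∃ f, IsWeightedAntimagic H b L f := by
  have hlt : (partialStar H x {u}ᶜ).edgeSet.ncard < L.card := by
    refine lt_of_lt_of_le (Set.ncard_lt_ncard (Set.ssubset_iff_exists.2
      ⟨SimpleGraph.edgeSet_mono partialStar_le, s(x, u), h.adj, ?_⟩)) hL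
    exact notMem_edgeSet_partialStar_compl_singleton
  by_cases! hexact : ∃ M ⊆ L, M.card = (partialStar H x {u}ᶜ).edgeSet.ncard ∧
      b x + ∑ i ∈ M, i = β
  · obtain ⟨M, hML, hM, hexact⟩ := hexact
    by_cases! hleaf : ∀ z, H.Adj u z → z ≠ x → (∀ w, H.Adj z w → w = u) ∧ b z = β
    · exact h.exists_isWeightedAntimagic_of_symm ⟨h.adj.symm, h.exists_adj,
        fun z hz hzx => (hleaf z hz hzx).1, fun z hz hzx => (hleaf z hz hzx).2, h.exists_leaf⟩
        hfree ih hL hML hM hexact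
    · obtain ⟨z, hz, hzx, hzu⟩ := hleaf
      refine h.exists_isWeightedAntimagic_of_subset hfree ih hL hML hM (.inl hexact) hz hzx ?_
      by_cases! hw : ∃ w, H.Adj z w ∧ w ≠ u
      · exact .inl hw
      · exact .inr (hexact ▸ (hzu hw).symm)
  · obtain ⟨z, hz, hzx⟩ := h.exists_adj
    obtain ⟨M, hML, hM, hne⟩ :=
      exists_subset_card_eq_add_sum_ne h.ncard_edgeSet_pos hlt (b x) (b z)
    exact h.exists_isWeightedAntimagic_of_subset hfree ih hL hML hM (.inr (hM ▸ hexact)) hz hzx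
      (.inr hne)

end DoubleBroom

section StarRemoval

variable {V : Type*} {H : SimpleGraph V} {b b' : V → ℕ} {u v w x y p q : V} {β : ℕ}

theorem sdiff_partialStar_univ_adj :
    (H \ partialStar H u Set.univ).Adj p q ↔ H.Adj p q ∧ p ≠ u ∧ q ≠ u := by
  rw [SimpleGraph.sdiff_adj, partialStar_adj]
  simp only [Set.mem_univ, and_true]
  tauto

theorem vertexSum_partialStar_univ_of_not_adj {f : Sym2 V → ℕ} (hvu : v ≠ u) (hv : ¬ H.Adj u v) :
    vertexSum (partialStar H u Set.univ) f v = 0 :=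
  vertexSum_eq_zero fun _ hw =>
    have hw := (partialStar_adj_of_ne hvu).1 hw
    hv (hw.2.1 ▸ hw.1.symm)

theorem IsTiedStar.isStarCenter_or_isTiedBroom
    (h : IsTiedStar (H \ partialStar H u Set.univ) b' x β)
    (hb : ∀ v, v ≠ u → ¬ H.Adj u v → b' v = b v)
    (hleaf : ∀ y, (H \ partialStar H u Set.univ).Adj x y → ¬ H.Adj u y) :
    IsStarCenter H x ∨ IsTiedBroom H b x u β := by
  obtain ⟨a, ha⟩ := h.exists_adj
  have hxu : x ≠ u := (sdiff_partialStar_univ_adj.1 ha).2.1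
  have hadj : ∀ {y}, H.Adj x y → y ≠ u → (H \ partialStar H u Set.univ).Adj x y :=
    fun hy hyu => sdiff_partialStar_univ_adj.2 ⟨hy, hxu, hyu⟩
  have heq : ∀ ⦃y⦄, H.Adj x y → y ≠ u → ∀ ⦃w⦄, H.Adj y w → w = x := fun y hy hyu w hw =>
    h.eq_of_adj (hadj hy hyu) (sdiff_partialStar_univ_adj.2
      ⟨hw, hyu, fun hwu => hleaf y (hadj hy hyu) (hwu ▸ hw.symm)⟩)
  have hxa := (sdiff_partialStar_univ_adj.1 ha).1
  have hau := (sdiff_partialStar_univ_adj.1 ha).2.2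
  by_cases! hbroom : H.Adj x u ∧ ∃ z, H.Adj u z ∧ z ≠ x
  · exact .inr ⟨hbroom.1, ⟨a, hxa, hau⟩, heq,
      fun y hy hyu => (hb y hyu (hleaf y (hadj hy hyu))).symm.trans (h.leaf_eq (hadj hy hyu)),
      hbroom.2⟩
  · refine .inl ⟨⟨a, hxa⟩, fun y hy w hw => ?_⟩
    by_cases hyu : y = u
    · subst hyu
      exact hbroom hy w hw
    · exact heq hy hyu hw

theorem IsTiedStar.isStarCenter_or_isTiedBroom_of_adj
    (h : IsTiedStar (H \ partialStar H u Set.univ) b' x β)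
    (hb : ∀ v, v ≠ u → ¬ H.Adj u v → b' v = b v) (hux : ¬ H.Adj u x)
    (hy : (H \ partialStar H u Set.univ).Adj x y) (huy : H.Adj u y)
    (hleaf : ∀ z, (H \ partialStar H u Set.univ).Adj x z → z ≠ y → ¬ H.Adj u z) :
    IsStarCenter H y ∨ IsTiedBroom H b x y β ∨ IsTiedBroom H b y u (b x) := by
  obtain ⟨hxy, hxu, hyu⟩ := sdiff_partialStar_univ_adj.1 hy
  have hadj : ∀ {z}, H.Adj x z → (H \ partialStar H u Set.univ).Adj x z :=
    fun hz => sdiff_partialStar_univ_adj.2 ⟨hz, hxu, fun hzu => hux (hzu ▸ hz.symm)⟩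
  have hzu : ∀ {z}, H.Adj x z → z ≠ u := fun hz => (sdiff_partialStar_univ_adj.1 (hadj hz)).2.2
  have heq : ∀ ⦃z⦄, H.Adj x z → ∀ ⦃w⦄, H.Adj z w → w ≠ u → w = x := fun z hz w hw hwu =>
    h.eq_of_adj (hadj hz) (sdiff_partialStar_univ_adj.2 ⟨hw, hzu hz, hwu⟩)
  by_cases! hz : ∃ z, H.Adj x z ∧ z ≠ y
  · refine .inr (.inl ⟨hxy, hz, fun z hz hzy w hw => heq hz hw ?_, fun z hz hzy => ?_,
      u, huy.symm, hxu.symm⟩)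
    · rintro rfl
      exact hleaf z (hadj hz) hzy hw.symm
    · exact (hb z (hzu hz) (hleaf z (hadj hz) hzy)).symm.trans (h.leaf_eq (hadj hz))
  by_cases! hw : ∃ w, H.Adj u w ∧ w ≠ y
  · refine .inr (.inr ⟨huy.symm, ⟨x, hxy.symm, hxu⟩, fun a ha hau w hw => ?_, fun a ha hau => ?_,
      hw⟩)
    · obtain rfl := heq hxy ha hau
      exact hz w hw
    · rw [heq hxy ha hau]
  · refine .inl ⟨⟨x, hxy.symm⟩, fun a ha w hw' => ?_⟩
    by_cases hau : a = u
    · exact hw w (hau ▸ hw')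
    · exact hz w (heq hxy ha hau ▸ hw')

theorem IsTiedStar.exists_pair_adj (h : IsTiedStar (H \ partialStar H u Set.univ) b' x β)
    (hb : ∀ v, v ≠ u → ¬ H.Adj u v → b' v = b v) (hstar : ∀ x, ¬ IsStarCenter H x)
    (hbroom : ∀ x u β, ¬ IsTiedBroom H b x u β) :
    ∃ v w, v ≠ w ∧ H.Adj u v ∧ H.Adj u w ∧ (H \ partialStar H u Set.univ).Adj x v ∧
      (w = x ∨ (H \ partialStar H u Set.univ).Adj x w) := by
  by_cases! hleaf : ∀ y, (H \ partialStar H u Set.univ).Adj x y → ¬ H.Adj u y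
  · rcases h.isStarCenter_or_isTiedBroom hb hleaf with h | h
    · exact absurd h (hstar x)
    · exact absurd h (hbroom x u β)
  obtain ⟨y, hy, huy⟩ := hleaf
  by_contra! hno
  have hux : ¬ H.Adj u x := fun hux => (hno y x hy.ne' huy hux hy).1 rfl
  have hleaf : ∀ z, (H \ partialStar H u Set.univ).Adj x z → z ≠ y → ¬ H.Adj u z :=
    fun z hz hzy huz => (hno z y hzy huz huy hz).2 hy
  rcases h.isStarCenter_or_isTiedBroom_of_adj hb hux hy huy hleaf with h | h | h
  · exact hstar y h
  · exact hbroom x y β h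
  · exact hbroom y u (b x) h

theorem IsTiedStar.of_adj (h : IsTiedStar H b y β) (hx : IsStarCenter H x) (hxy : H.Adj x y) :
    IsTiedStar H b x β where
  toIsStarCenter := hx
  leaf_eq a ha := by
    obtain rfl := h.eq_of_adj hxy.symm ha
    exact h.center_eq fun p hp q hq => (hx.eq_of_adj hxy hp).trans (hx.eq_of_adj hxy hq).symm
  center_eq _ := h.leaf_eq hxy.symm

theorem IsStarCenter.eq_or_adj (hx : IsStarCenter H x) (hpx : p = x ∨ H.Adj x p)
    (hpy : p = y ∨ H.Adj y p) : y = x ∨ H.Adj x y := by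
  rcases hpx with rfl | hpx
  · exact hpy.imp Eq.symm SimpleGraph.Adj.symm
  · rcases hpy with rfl | hpy
    · exact .inr hpx
    · exact .inl (hx.eq_of_adj hpx hpy.symm)

-- The weights of `v` and `w` change by opposite amounts and the others do not change at all, so the
-- weights of two leaves (or of both ends of an isolated edge) cannot stay equal.
theorem IsTiedStar.not_isTiedStar_of_exchange (h : IsTiedStar H b x β) (hv : H.Adj x v)
    (hw : w = x ∨ H.Adj x w) (hbv : b' v ≠ b v) (hsum : b' v + b' w = b v + b w)
    (hb : ∀ p, p ≠ v → p ≠ w → b' p = b p) (β' : ℕ) : ¬ IsTiedStar H b' x β' := by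
  intro h'
  have hv₁ := h.leaf_eq hv
  have hv₂ := h'.leaf_eq hv
  rcases hw with rfl | hw
  · by_cases hsub : (H.neighborSet w).Subsingleton
    · have hw₁ := h.center_eq hsub
      have hw₂ := h'.center_eq hsub
      lia
    · obtain ⟨a, ha, hav⟩ := (Set.not_subsingleton_iff.1 hsub).exists_ne v
      have ha₁ := h.leaf_eq ha
      have ha₂ := h'.leaf_eq ha
      have := hb a hav (H.ne_of_adj ha).symm
      lia
  · have hw₁ := h.leaf_eq hw
    have hw₂ := h'.leaf_eq hw
    lia

theorem IsTiedStar.of_exchange (h : IsTiedStar H b x β) (hv : H.Adj x v)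
    (hw : w = x ∨ H.Adj x w) (hbv : b' v ≠ b v) (hsum : b' v + b' w = b v + b w)
    (hb : ∀ p, p ≠ v → p ≠ w → b' p = b p) {β' : ℕ} (h' : IsTiedStar H b' y β') :
    IsTiedStar H b y β' := by
  have hx := h.not_isTiedStar_of_exchange hv hw hbv hsum hb β'
  have hyx : ¬ (y = x ∨ H.Adj x y) := by
    rintro (rfl | hxy)
    · exact hx h'
    · exact hx (h'.of_adj h.toIsStarCenter hxy)
  have hb' : ∀ p, p = y ∨ H.Adj y p → b' p = b p := fun p hp =>
    hb p (fun hpv => hyx (h.eq_or_adj (.inr (hpv ▸ hv)) hp))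
      (fun hpw => hyx (h.eq_or_adj (hpw ▸ hw) hp))
  exact ⟨h'.toIsStarCenter, fun p hp => (hb' p (.inr hp)).symm.trans (h'.leaf_eq hp),
    fun hsub => (hb' y (.inl rfl)).symm.trans (h'.center_eq hsub)⟩

end StarRemoval

section HeaviestVertex

variable {V : Type*} {H : SimpleGraph V} {b : V → ℕ} {L B : Finset ℕ}
  {f f₀ : Sym2 V → ℕ} {u v w x p z : V}

/-- Among the non-isolated vertices, `u` could reach the largest total weight with labels from `L`,
and it has the largest degree among the vertices that could reach this weight. -/
structure IsHeaviest (H : SimpleGraph V) (b : V → ℕ) (L : Finset ℕ) (u : V) : Prop where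
  exists_adj : ∃ y, H.Adj u y
  le : ∀ ⦃v w⦄, H.Adj v w →
    toLex (b v + maxSum L (H.neighborSet v).ncard, (H.neighborSet v).ncard) ≤
      toLex (b u + maxSum L (H.neighborSet u).ncard, (H.neighborSet u).ncard)

/-- A labelling of the edges at `u` by `B` in which no leaf edge gets the largest label. -/
structure IsHeavyStarLabelling (H : SimpleGraph V) (u : V) (B : Finset ℕ) (f₀ : Sym2 V → ℕ) :
    Prop where
  bijOn : Set.BijOn f₀ (H.incidenceSet u) B
  exists_lt : ∀ ⦃y⦄, H.Adj u y → (∀ w, H.Adj y w → w = u) → ∃ j ∈ B, f₀ s(u, y) < j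

/-- After the edges at `u` have been labelled by `f₀` and removed, `x` is the center of a tied
star. -/
def IsTiedAfter (H : SimpleGraph V) (b : V → ℕ) (u : V) (f₀ : Sym2 V → ℕ) (x : V) : Prop :=
  ∃ β, IsTiedStar (H \ partialStar H u Set.univ)
    (fun v => b v + vertexSum (partialStar H u Set.univ) f₀ v) x β

theorem exists_isHeaviest [Finite V] (hH : H ≠ ⊥) (b : V → ℕ) (L : Finset ℕ) :
    ∃ u, IsHeaviest H b L u := by
  obtain ⟨v, w, hvw⟩ := SimpleGraph.ne_bot_iff_exists_adj.1 hH
  obtain ⟨u, hu, hmax⟩ := Set.exists_max_image {v | ∃ w, H.Adj v w}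
    (fun v => toLex (b v + maxSum L (H.neighborSet v).ncard, (H.neighborSet v).ncard))
    (Set.toFinite _) ⟨v, w, hvw⟩
  exact ⟨u, hu, fun v w hvw => hmax v ⟨w, hvw⟩⟩

theorem exists_isHeavyStarLabelling [Finite V] (hu : ¬ IsStarCenter H u) {y : V} (huy : H.Adj u y)
    (hB : B.card = (H.neighborSet u).ncard) : ∃ f₀, IsHeavyStarLabelling H u B f₀ := by
  classical
  obtain ⟨c, huc, w, hcw, hwu⟩ : ∃ c, H.Adj u c ∧ ∃ w, H.Adj c w ∧ w ≠ u := by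
    by_contra! hno
    exact hu ⟨⟨y, huy⟩, hno⟩
  obtain ⟨g, hg⟩ := exists_bijOn_coe_finset (Set.toFinite (H.incidenceSet u))
    ((ncard_incidenceSet H u).trans hB.symm)
  have hucI := (H.mem_incidenceSet u c).2 huc
  obtain ⟨m, hmB, hmax⟩ := B.exists_max_image id ⟨_, hg.mapsTo hucI⟩
  obtain ⟨e, he, rfl⟩ := hg.surjOn hmB
  have hbij := hg.comp (Equiv.swap_bijOn_self (iff_of_true he hucI))
  refine ⟨_, hbij, fun y huy hy => ⟨_, hmB, lt_of_le_of_ne ?_ fun heq => ?_⟩⟩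
  · exact hmax _ (hbij.mapsTo ((H.mem_incidenceSet u y).2 huy))
  · have hyc := hbij.injOn ((H.mem_incidenceSet u y).2 huy) hucI (by simpa using heq)
    exact hwu (hy w (Sym2.congr_right.1 hyc ▸ hcw))

theorem IsHeavyStarLabelling.comp_swap [DecidableEq V] (hf : IsHeavyStarLabelling H u B f₀)
    (hv : H.Adj u v) (hw : H.Adj u w) (hvx : ∃ x, H.Adj v x ∧ x ≠ u)
    (hwx : ∃ x, H.Adj w x ∧ x ≠ u) :
    IsHeavyStarLabelling H u B (f₀ ∘ Equiv.swap s(u, v) s(u, w)) where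
  bijOn := hf.bijOn.comp (Equiv.swap_bijOn_self
    (iff_of_true ((H.mem_incidenceSet u v).2 hv) ((H.mem_incidenceSet u w).2 hw)))
  exists_lt y huy hy := by
    obtain ⟨x, hvx, hxu⟩ := hvx
    obtain ⟨x', hwx', hxu'⟩ := hwx
    rw [Function.comp_apply, Equiv.swap_apply_of_ne_of_ne]
    · exact hf.exists_lt huy hy
    · exact fun h => hxu (hy x (Sym2.congr_right.1 h ▸ hvx))
    · exact fun h => hxu' (hy x' (Sym2.congr_right.1 h ▸ hwx'))

theorem vertexSum_partialStar_univ_comp_swap_of_ne [DecidableEq V] (huv : H.Adj u v)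
    (huw : H.Adj u w) (hpv : p ≠ v) (hpw : p ≠ w) :
    vertexSum (partialStar H u Set.univ) (f₀ ∘ Equiv.swap s(u, v) s(u, w)) p =
      vertexSum (partialStar H u Set.univ) f₀ p := by
  rcases eq_or_ne p u with rfl | hpu
  · refine finsum_mem_eq_of_bijOn (Equiv.swap s(p, v) s(p, w))
      (Equiv.swap_bijOn_self (iff_of_true ?_ ?_)) fun _ _ => rfl
    · exact (SimpleGraph.mem_incidenceSet _ p v).2 ⟨huv, .inl ⟨rfl, trivial⟩⟩
    · exact (SimpleGraph.mem_incidenceSet _ p w).2 ⟨huw, .inl ⟨rfl, trivial⟩⟩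
  by_cases hup : H.Adj u p
  · rw [vertexSum_partialStar_leaf hup (Set.mem_univ p),
      vertexSum_partialStar_leaf hup (Set.mem_univ p), Function.comp_apply,
      Equiv.swap_apply_of_ne_of_ne] <;>
    rwa [ne_eq, Sym2.congr_right]
  · rw [vertexSum_partialStar_univ_of_not_adj hpu hup,
      vertexSum_partialStar_univ_of_not_adj hpu hup]

theorem IsHeavyStarLabelling.exists_improvement (hf : IsHeavyStarLabelling H u B f₀)
    (hstar : ∀ x, ¬ IsStarCenter H x) (hbroom : ∀ x u β, ¬ IsTiedBroom H b x u β)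
    (hx : IsTiedAfter H b u f₀ x) :
    ∃ f₁, IsHeavyStarLabelling H u B f₁ ∧ ¬ IsTiedAfter H b u f₁ x ∧
      ∀ y, IsTiedAfter H b u f₁ y → IsTiedAfter H b u f₀ y := by
  classical
  obtain ⟨β, hx⟩ := hx
  obtain ⟨v, w, hvw, huv, huw, hxv, hxw⟩ := hx.exists_pair_adj
    (fun v hvu hv => by rw [vertexSum_partialStar_univ_of_not_adj hvu hv, add_zero]) hstar hbroom
  have hsum : ∀ f p, H.Adj u p → vertexSum (partialStar H u Set.univ) f p = f s(u, p) :=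
    fun f p hp => vertexSum_partialStar_leaf hp (Set.mem_univ p)
  have hne : f₀ s(u, w) ≠ f₀ s(u, v) := fun h => hvw (Sym2.congr_right.1 (hf.bijOn.injOn
    ((H.mem_incidenceSet u w).2 huw) ((H.mem_incidenceSet u v).2 huv) h)).symm
  set f₁ := f₀ ∘ Equiv.swap s(u, v) s(u, w) with hf₁
  have hbv : b v + vertexSum (partialStar H u Set.univ) f₁ v ≠
      b v + vertexSum (partialStar H u Set.univ) f₀ v := by
    simpa [hf₁, hsum, huv] using hne
  have hbvw : b v + vertexSum (partialStar H u Set.univ) f₁ v +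
      (b w + vertexSum (partialStar H u Set.univ) f₁ w) =
      b v + vertexSum (partialStar H u Set.univ) f₀ v +
      (b w + vertexSum (partialStar H u Set.univ) f₀ w) := by
    simp only [hf₁, hsum, huv, huw, Function.comp_apply, Equiv.swap_apply_left,
      Equiv.swap_apply_right]
    lia
  have hoff : ∀ p, p ≠ v → p ≠ w → b p + vertexSum (partialStar H u Set.univ) f₁ p =
      b p + vertexSum (partialStar H u Set.univ) f₀ p := fun p hpv hpw => by
    rw [vertexSum_partialStar_univ_comp_swap_of_ne huv huw hpv hpw]
  have hnonleaf : ∀ ⦃p q⦄, (H \ partialStar H u Set.univ).Adj p q → ∃ q, H.Adj p q ∧ q ≠ u :=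
    fun p q hpq => have hpq := sdiff_partialStar_univ_adj.1 hpq; ⟨q, hpq.1, hpq.2.2⟩
  refine ⟨_, hf.comp_swap huv huw (hnonleaf hxv.symm) ?_,
    fun ⟨β', h'⟩ => hx.not_isTiedStar_of_exchange hxv hxw hbv hbvw hoff β' h',
    fun y ⟨β', h'⟩ => ⟨β', hx.of_exchange hxv hxw hbv hbvw hoff h'⟩⟩
  rcases hxw with rfl | hxw
  · exact hnonleaf hxv
  · exact hnonleaf hxw.symm

theorem IsHeaviest.add_lt_of_exists_adj [Finite V] (hu : IsHeaviest H b L u)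
    (hB : B ⊆ L) (hcard : B.card = (H.neighborSet u).ncard) (hmax : ∑ i ∈ B, i = maxSum L B.card)
    (hfB : Set.BijOn f (H.incidenceSet u) B) (hinj : Set.InjOn f H.edgeSet) {s : Finset ℕ}
    (hs : s ⊆ L) (hfs : Set.BijOn f (H.incidenceSet z) s) (hz : H.Adj u z) {w : V}
    (hw : H.Adj z w) (hwu : w ≠ u) : b z + ∑ i ∈ s, i < b u + ∑ i ∈ B, i := by
  have hzle := Prod.Lex.toLex_le_toLex.1 (hu.le hz.symm)
  have hscard : s.card = (H.neighborSet z).ncard :=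
    (card_eq_ncard_of_bijOn hfs).trans (ncard_incidenceSet H z)
  have hsle := sum_le_maxSum hs
  rw [← hscard, ← hcard, ← hmax] at hzle
  have hz2 : 1 < s.card := by
    rw [hscard, Set.one_lt_ncard]
    exact ⟨u, hz.symm, w, hw, hwu.symm⟩
  have hshared : ∀ i ∈ s, i ∈ B → i = f s(u, z) := by
    intro i his hiB
    obtain ⟨e, he, rfl⟩ := hfs.surjOn his
    obtain ⟨e', he', heq⟩ := hfB.surjOn hiB
    obtain rfl := hinj he'.1 he.1 heq
    rw [(Sym2.mem_and_mem_iff hz.ne).1 ⟨he'.2, he.2⟩]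
  rcases lt_or_ge 1 B.card with hB2 | hB1
  · obtain ⟨a, has, ha⟩ := Finset.exists_mem_ne hz2 (f s(u, z))
    obtain ⟨a', ha'B, ha'⟩ := Finset.exists_mem_ne hB2 (f s(u, z))
    have := sum_lt_maxSum_of_sum_eq_maxSum hB hmax hs has (fun h => ha (hshared a has h)) ha'B
      fun h => ha' (hshared a' h ha'B)
    lia
  · -- Here `z` has larger degree than `u`, so the comparison of first components is strict.
    lia

theorem IsHeaviest.ne_of_adj [Finite V] (hu : IsHeaviest H b L u)
    (hB : B ⊆ L) (hcard : B.card = (H.neighborSet u).ncard) (hmax : ∑ i ∈ B, i = maxSum L B.card)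
    (hf : IsHeavyStarLabelling H u B f) (hinj : Set.InjOn f H.edgeSet)
    (hmaps : Set.MapsTo f H.edgeSet L) (hz : H.Adj u z) :
    b u + vertexSum H f u ≠ b z + vertexSum H f z := by
  obtain ⟨s, hs, hfs⟩ := exists_subset_bijOn (hinj.mono (H.incidenceSet_subset z))
    (hmaps.mono_left (H.incidenceSet_subset z))
  rw [vertexSum, vertexSum, finsum_mem_eq_sum_of_bijOn hf.bijOn, finsum_mem_eq_sum_of_bijOn hfs]
  refine ne_of_gt ?_
  by_cases! hleaf : ∃ w, H.Adj z w ∧ w ≠ u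
  · obtain ⟨w, hw, hwu⟩ := hleaf
    exact hu.add_lt_of_exists_adj hB hcard hmax hf.bijOn hinj hs hfs hz hw hwu
  · obtain ⟨j, hjB, hj⟩ := hf.exists_lt hz hleaf
    have hzle := Prod.Lex.toLex_le_toLex.1 (hu.le hz.symm)
    rw [← ncard_incidenceSet H z, ← card_eq_ncard_of_bijOn hfs, ← hcard, ← hmax] at hzle
    have hmem : f s(u, z) ∈ s := hfs.mapsTo ⟨hz, Sym2.mem_mk_right u z⟩
    have hjs : j ∉ s := by
      intro hjs
      obtain ⟨e, he, rfl⟩ := hfs.surjOn hjs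
      obtain ⟨w, rfl⟩ := Sym2.mem_iff_exists.1 he.2
      rw [hleaf w he.1, Sym2.eq_swap] at hj
      exact lt_irrefl _ hj
    have := sum_lt_maxSum hs hmem (hB hjB) hjs hj
    lia

theorem exists_isWeightedAntimagic_of_forall_not [Finite V] (hH : H ≠ ⊥)
    (hstar : ∀ x, ¬ IsStarCenter H x) (hbroom : ∀ x u β, ¬ IsTiedBroom H b x u β)
    (ih : ∀ H' < H, IsLabelable H') (hL : H.edgeSet.ncard ≤ L.card) :
    ∃ f, IsWeightedAntimagic H b L f := by
  obtain ⟨u, hu⟩ := exists_isHeaviest hH b L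
  obtain ⟨y, hy⟩ := hu.exists_adj
  obtain ⟨B, hBL, hB, hmax⟩ := exists_sum_eq_maxSum (L := L) (k := (H.neighborSet u).ncard) (by
    rw [← ncard_incidenceSet]
    exact (Set.ncard_le_ncard (H.incidenceSet_subset u) (Set.toFinite _)).trans hL)
  rw [← hB] at hmax
  obtain ⟨f₁, hf₁⟩ := exists_isHeavyStarLabelling (hstar u) hy hB
  obtain ⟨f₀, hf₀, hfree⟩ := exists_forall_not_of_improve
    (fun f₀ hf₀ x hx => IsHeavyStarLabelling.exists_improvement hf₀ hstar hbroom hx) hf₁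
  refine exists_isWeightedAntimagic_of_sdiff (K := partialStar H u Set.univ) partialStar_le
    (SimpleGraph.ne_bot_iff_exists_adj.2 ⟨u, y, hy, .inl ⟨rfl, trivial⟩⟩) ih hL hBL
    (edgeSet_partialStar_univ ▸ hf₀.bijOn) (fun x β h => hfree x ⟨β, h⟩)
    fun f heq hinj hmaps p q hpq => ?_
  rw [edgeSet_partialStar_univ] at heq
  have hf : IsHeavyStarLabelling H u B f := ⟨hf₀.bijOn.congr heq.symm, fun y hy hleaf => by
    rw [heq ((H.mem_incidenceSet u y).2 hy)]
    exact hf₀.exists_lt hy hleaf⟩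
  obtain ⟨hpq, ⟨rfl, -⟩ | ⟨rfl, -⟩⟩ := hpq
  · exact hu.ne_of_adj hBL hB hmax hf hinj hmaps hpq
  · exact (hu.ne_of_adj hBL hB hmax hf hinj hmaps hpq.symm).symm

theorem isLabelable [Finite V] (H : SimpleGraph V) : IsLabelable H := by
  induction H using WellFoundedLT.induction with
  | ind H ih =>
    intro b L hfree hL
    rcases eq_or_ne H ⊥ with rfl | hH
    · exact ⟨0, by simp, by simp [Set.MapsTo], by simp⟩
    by_cases! hstar : ∃ x, IsStarCenter H x
    · obtain ⟨x, hx⟩ := hstar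
      exact hx.exists_isWeightedAntimagic hfree ih hL
    by_cases! hbroom : ∃ x u β, IsTiedBroom H b x u β
    · obtain ⟨x, u, β, h⟩ := hbroom
      exact h.exists_isWeightedAntimagic hfree ih hL
    exact exists_isWeightedAntimagic_of_forall_not hH hstar hbroom ih hL

end HeaviestVertex

section Pendants

variable {V : Type*} {G : SimpleGraph V} {f : Sym2 V → ℕ} {u v x : V}

theorem IsStarCenter.eq_or_adj_of_preconnected (hx : IsStarCenter G x) (hG : G.Preconnected)
    (v : V) : v = x ∨ G.Adj x v := by
  induction (G.reachable_iff_reflTransGen x v).1 (hG x v) with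
  | refl => exact .inl rfl
  | tail _ hpq ih =>
    rcases ih with rfl | ih
    · exact .inr hpq
    · exact .inl (hx.eq_of_adj ih hpq)

theorem IsStarCenter.nontrivial_neighborSet (hx : IsStarCenter G x) (hG : G.Preconnected)
    (hV : Nat.card V ≠ 2) : (G.neighborSet x).Nontrivial := by
  obtain ⟨y, hy⟩ := hx.exists_adj
  refine Set.not_subsingleton_iff.1 fun hsub => hV (Nat.card_eq_two_iff.2 ⟨x, y, hy.ne, ?_⟩)
  refine Set.eq_univ_of_forall fun v => (hx.eq_or_adj_of_preconnected hG v).imp_right fun hv => ?_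
  exact hsub hv hy

theorem exists_adj_ne_or_exists_adj_ne (hG : G.Preconnected) (hV : Nat.card V ≠ 2)
    (huv : G.Adj u v) : (∃ w, G.Adj u w ∧ w ≠ v) ∨ ∃ w, G.Adj v w ∧ w ≠ u := by
  by_contra! hno
  have hu : IsStarCenter G u := ⟨⟨v, huv⟩, fun y hy w hw => hno.2 w (hno.1 y hy ▸ hw)⟩
  obtain ⟨w, hw, hwv⟩ := (hu.nontrivial_neighborSet hG hV).exists_ne v
  exact hwv (hno.1 w hw)

theorem lt_vertexSum [Finite V] {w w' : V} (hw : G.Adj v w) (hw' : G.Adj v w') (hne : w' ≠ w)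
    (hpos : 0 < f s(v, w')) : f s(v, w) < vertexSum G f v := by
  rw [vertexSum, finsum_mem_eq_finite_toFinset_sum _ (Set.toFinite _)]
  refine Finset.single_lt_sum (f := f) (j := s(v, w')) (fun h => hne (Sym2.congr_right.1 h))
    ?_ ?_ hpos fun _ _ _ => Nat.zero_le _ <;> simpa

theorem IsStarCenter.isLocalAntimagic [Finite V] (hx : IsStarCenter G x) (hG : G.Preconnected)
    (hV : Nat.card V ≠ 2) (hf : Set.BijOn f G.edgeSet (Set.Icc 1 G.edgeSet.ncard)) :
    IsLocalAntimagic G f := by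
  have hlt : ∀ a, G.Adj x a → vertexSum G f a < vertexSum G f x := fun a ha => by
    obtain ⟨c, hc, hca⟩ := (hx.nontrivial_neighborSet hG hV).exists_ne a
    rw [vertexSum_eq_of_forall_adj_eq ha (hx.eq_of_adj ha)]
    exact lt_vertexSum ha hc hca (hf.mapsTo hc).1
  refine ⟨hf, fun p q hpq => ?_⟩
  rcases hx.eq_or_adj_of_preconnected hG p with rfl | hp
  · exact (hlt q hpq).ne'
  · obtain rfl := hx.eq_of_adj hp hpq
    exact (hlt p hp).ne

theorem IsWeightedAntimagic.isLocalAntimagic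
    (hf : IsWeightedAntimagic G 0 (Finset.Icc 1 G.edgeSet.ncard) f) : IsLocalAntimagic G f := by
  obtain ⟨s, hs, hfs⟩ := exists_subset_bijOn hf.injOn hf.mapsTo
  obtain rfl := Finset.eq_of_subset_of_card_le hs (by simp [card_eq_ncard_of_bijOn hfs])
  rw [Finset.coe_Icc] at hfs
  exact ⟨hfs, fun u v huv => by simpa using hf.ne huv⟩

theorem exists_isLocalAntimagic [Finite V] (hG : G.Preconnected) (hV : Nat.card V ≠ 2) :
    ∃ f, IsLocalAntimagic G f := by
  have hcard : (Finset.Icc 1 G.edgeSet.ncard).card = G.edgeSet.ncard := by simp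
  by_cases! hfree : IsTieFree G 0
  · obtain ⟨f, hf⟩ := isLabelable G 0 _ hfree hcard.ge
    exact ⟨f, hf.isLocalAntimagic⟩
  · simp only [IsTieFree, not_forall, not_not] at hfree
    obtain ⟨x, β, hx⟩ := hfree
    obtain ⟨f, hf⟩ := exists_bijOn_coe_finset (Set.toFinite _) hcard.symm
    rw [Finset.coe_Icc] at hf
    exact ⟨f, hx.isLocalAntimagic hG hV hf⟩

/-- The pendant vertices of `G`, i.e. its vertices of degree `1`. -/
def pendants (G : SimpleGraph V) : Set V :=
  {v | (G.neighborSet v).ncard = 1}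

theorem exists_forall_adj_iff_of_mem_pendants (hv : v ∈ pendants G) :
    ∃ y, ∀ w, G.Adj v w ↔ w = y := by
  obtain ⟨y, hy⟩ := Set.ncard_eq_one.1 hv
  exact ⟨y, fun w => by rw [← SimpleGraph.mem_neighborSet, hy, Set.mem_singleton_iff]⟩

theorem exists_vertexSum_eq_of_mem_pendants (hv : v ∈ pendants G) (f : Sym2 V → ℕ) :
    ∃ y, G.Adj y v ∧ vertexSum G f v = f s(y, v) := by
  obtain ⟨y, hy⟩ := exists_forall_adj_iff_of_mem_pendants hv
  have hyv : G.Adj y v := ((hy y).2 rfl).symm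
  exact ⟨y, hyv, vertexSum_eq_of_forall_adj_eq hyv fun w => (hy w).1⟩

theorem injOn_vertexSum_pendants (hG : G.Preconnected) (hV : Nat.card V ≠ 2)
    (hf : Set.InjOn f G.edgeSet) : Set.InjOn (vertexSum G f) (pendants G) := by
  intro v hv w hw heq
  obtain ⟨y, hy, hvy⟩ := exists_vertexSum_eq_of_mem_pendants hv f
  obtain ⟨z, hz, hwz⟩ := exists_vertexSum_eq_of_mem_pendants hw f
  rcases Sym2.eq_iff.1 (hf hy hz (hvy.symm.trans (heq.trans hwz))) with ⟨-, h⟩ | ⟨rfl, rfl⟩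
  · exact h
  obtain ⟨v', hv'⟩ := exists_forall_adj_iff_of_mem_pendants hv
  obtain ⟨y', hy'⟩ := exists_forall_adj_iff_of_mem_pendants hw
  rcases exists_adj_ne_or_exists_adj_ne hG hV hy with ⟨w, hw, hne⟩ | ⟨w, hw, hne⟩
  · exact absurd (((hy' w).1 hw).trans ((hy' _).1 hy).symm) hne
  · exact absurd (((hv' w).1 hw).trans ((hv' _).1 hz).symm) hne

theorem vertexSum_le_of_mem_pendants {m : ℕ} (hf : Set.MapsTo f G.edgeSet (Set.Iic m))
    (hv : v ∈ pendants G) : vertexSum G f v ≤ m := by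
  obtain ⟨y, hy, hvy⟩ := exists_vertexSum_eq_of_mem_pendants hv f
  exact hvy ▸ hf hy

theorem IsLocalAntimagic.exists_lt_vertexSum [Finite V] (hf : IsLocalAntimagic G f)
    (hG : G.Preconnected) (hV : Nat.card V ≠ 2) (hne : G ≠ ⊥) :
    ∃ x, G.edgeSet.ncard < vertexSum G f x := by
  have hpos : 0 < G.edgeSet.ncard :=
    (Set.ncard_pos (Set.toFinite _)).2 (SimpleGraph.edgeSet_nonempty.2 hne)
  obtain ⟨e, he, hmax⟩ := hf.1.surjOn (Set.right_mem_Icc.2 hpos)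
  induction e with
  | _ u v =>
    rw [← hmax]
    rcases exists_adj_ne_or_exists_adj_ne hG hV he with ⟨w, hw, hne⟩ | ⟨w, hw, hne⟩
    · exact ⟨u, lt_vertexSum he hw hne (hf.1.mapsTo hw).1⟩
    · rw [Sym2.eq_swap]
      exact ⟨v, lt_vertexSum (SimpleGraph.Adj.symm he) hw hne (hf.1.mapsTo hw).1⟩

theorem IsLocalAntimagic.ncard_pendants_lt_colorCount [Finite V] (hf : IsLocalAntimagic G f)
    (hG : G.Connected) (hV : Nat.card V ≠ 2) : (pendants G).ncard < colorCount G f := by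
  have hnotMem : ∃ x, vertexSum G f x ∉ vertexSum G f '' pendants G := by
    rcases eq_or_ne G ⊥ with rfl | hne
    · simpa [pendants] using hG.nonempty
    · obtain ⟨x, hx⟩ := hf.exists_lt_vertexSum hG.preconnected hV hne
      refine ⟨x, ?_⟩
      rintro ⟨v, hv, heq⟩
      have := vertexSum_le_of_mem_pendants (hf.1.mapsTo.mono_right Set.Icc_subset_Iic_self) hv
      lia
  obtain ⟨x, hx⟩ := hnotMem
  rw [← (injOn_vertexSum_pendants hG.preconnected hV hf.1.injOn).ncard_image]
  exact Set.ncard_lt_ncard (Set.ssubset_iff_exists.2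
    ⟨Set.image_subset_range _ _, _, Set.mem_range_self x, hx⟩)

end Pendants

theorem chiLA_ge_pendants {V : Type*} [Fintype V] (G : SimpleGraph V) (hG : G.Connected)
    (hK2 : Fintype.card V ≠ 2) (k : ℕ)
    (hk : {v : V | (G.neighborSet v).ncard = 1}.ncard = k) :
    k + 1 ≤ chiLA G := by
  rw [← Nat.card_eq_fintype_card] at hK2
  obtain ⟨f, hf⟩ := exists_isLocalAntimagic hG.preconnected hK2
  refine le_csInf ⟨_, f, hf, rfl⟩ ?_
  rintro _ ⟨g, hg, rfl⟩
  exact hk ▸ hg.ncard_pendants_lt_colorCount hG hK2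
end

section
/- For integers p, q ≥ 3 with p ≢ q (mod 2), χ_la(K_{p,q}) = 3. -/
open scoped BigOperators

/-!
Two colours would force all row sums and all column sums of the matrix of labels to be constant,
which parity forbids since `|V| * |W| + 1` and one of `|V|`, `|W|` are odd.

Conversely, replace a label `x` by the centered label `2 * x - (|V| * |W| + 1)`. With `|V| = p` odd
and `|W| = 2 * m`, it suffices to find a `p × m` array containing each of `1, 3, …, 2 * p * m - 1`
exactly once up to sign, with all column sums `±1`: the array next to its negative has row sums `0`
and column sums `±1`, so the columns miss the magic constant by as little as parity allows. Such an
array exists for `p = 3`, and two rows can always be added so as to change the signs of all column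
sums.
-/

open Function

section Graph

variable {V W : Type*} {G : SimpleGraph V} {H : SimpleGraph W}

theorem vertexSum_eq_finsum_neighborSet (f : Sym2 V → ℕ) (v : V) :
    vertexSum G f v = ∑ᶠ w ∈ G.neighborSet v, f s(v, w) := by
  refine (finsum_mem_eq_of_bijOn (fun w => s(v, w)) ⟨fun w hw => ?_, ?_, ?_⟩ fun _ _ => rfl).symm
  · exact G.mk'_mem_incidenceSet_left_iff.2 hw
  · exact fun _ _ _ _ h => Sym2.congr_right.1 h
  · rintro e ⟨he, hv⟩
    obtain ⟨w, rfl⟩ := hv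
    exact ⟨w, he, rfl⟩

theorem vertexSum_comp_map (e : G ≃g H) (f : Sym2 W → ℕ) (v : V) :
    vertexSum G (f ∘ Sym2.map e) v = vertexSum H f (e v) := by
  simp only [vertexSum_eq_finsum_neighborSet]
  refine finsum_mem_eq_of_bijOn e ⟨fun w hw => ?_, e.injective.injOn, fun w hw => ?_⟩ fun _ _ => rfl
  · exact e.map_adj_iff.2 hw
  · exact ⟨e.symm w, e.map_adj_iff.1 (by simpa using hw), by simp⟩

theorem colorCount_comp_map (e : G ≃g H) (f : Sym2 W → ℕ) :
    colorCount G (f ∘ Sym2.map e) = colorCount H f := by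
  have hsum : vertexSum G (f ∘ Sym2.map e) = vertexSum H f ∘ e :=
    funext (vertexSum_comp_map e f)
  rw [colorCount, hsum, e.surjective.range_comp, colorCount]

theorem IsLocalAntimagic.comp_map {f : Sym2 W → ℕ} (hf : IsLocalAntimagic H f) (e : G ≃g H) :
    IsLocalAntimagic G (f ∘ Sym2.map e) := by
  have hedges : Set.BijOn (Sym2.map e) G.edgeSet H.edgeSet := by
    refine ⟨fun _ => e.map_mem_edgeSet_iff.2, (Sym2.map.injective e.injective).injOn,
      fun x hx => ⟨x.map e.symm, e.symm.map_mem_edgeSet_iff.2 hx, ?_⟩⟩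
    simp [Sym2.map_map]
  refine ⟨hedges.ncard_eq ▸ hf.1.comp hedges, fun u v huv => ?_⟩
  simpa only [vertexSum_comp_map] using hf.2 _ _ (e.map_adj_iff.2 huv)

theorem chiLA_congr (e : G ≃g H) : chiLA G = chiLA H := by
  refine congrArg sInf (Set.ext fun n => ⟨?_, ?_⟩)
  · rintro ⟨f, hf, rfl⟩
    exact ⟨_, hf.comp_map e.symm, colorCount_comp_map e.symm f⟩
  · rintro ⟨f, hf, rfl⟩
    exact ⟨_, hf.comp_map e, colorCount_comp_map e f⟩

theorem vertexSum_eq_of_adj_of_colorCount_le_two [Finite V] {f : Sym2 V → ℕ}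
    (hf : IsLocalAntimagic G f) (hcount : colorCount G f ≤ 2) {u v w : V}
    (huw : G.Adj u w) (hvw : G.Adj v w) : vertexSum G f u = vertexSum G f v := by
  by_contra huv
  have hthree : 2 < colorCount G f := (Set.two_lt_ncard_iff).2
    ⟨_, _, _, ⟨u, rfl⟩, ⟨v, rfl⟩, ⟨w, rfl⟩, huv, hf.2 u w huw, hf.2 v w hvw⟩
  exact hthree.not_ge hcount

theorem two_mul_finsum_edgeSet {f : Sym2 V → ℕ}
    (hf : Set.BijOn f G.edgeSet (Set.Icc 1 G.edgeSet.ncard)) :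
    2 * ∑ᶠ e ∈ G.edgeSet, f e = G.edgeSet.ncard * (G.edgeSet.ncard + 1) := by
  have hlabels : ∑ᶠ e ∈ G.edgeSet, f e = ∑ k ∈ Finset.Icc 1 G.edgeSet.ncard, k := by
    rw [finsum_mem_eq_of_bijOn f hf (f := f) (g := fun k => k) fun _ _ => rfl,
      ← Finset.coe_Icc, finsum_mem_coe_finset]
  have hgauss := Finset.sum_range_id_mul_two (G.edgeSet.ncard + 1)
  rw [Finset.range_eq_Ico, Finset.sum_eq_sum_Ico_succ_bot (Nat.succ_pos _), zero_add, zero_add,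
    Nat.succ_eq_add_one, Finset.Ico_add_one_right_eq_Icc, Nat.add_sub_cancel] at hgauss
  linarith

end Graph

theorem bijOn_Icc_one_ncard {α : Type*} {s : Set α} {f : α → ℕ}
    (hmaps : Set.MapsTo f s (Set.Icc 1 s.ncard)) (hinj : Set.InjOn f s) :
    Set.BijOn f s (Set.Icc 1 s.ncard) := by
  refine ⟨hmaps, hinj, (Set.eq_of_subset_of_ncard_le hmaps.image_subset ?_).ge⟩
  rw [hinj.ncard_image, ← Finset.coe_Icc, Set.ncard_coe_finset, Nat.card_Icc, Nat.add_sub_cancel]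

section CompleteBipartite

open Fintype (card)

variable {V W : Type*}

theorem injective_mk_inl_inr (V W : Type*) :
    Injective fun x : V × W => (s(.inl x.1, .inr x.2) : Sym2 (V ⊕ W)) := by
  rintro ⟨v, w⟩ ⟨v', w'⟩ h
  simpa using h

theorem vertexSum_inl [Fintype W] (f : Sym2 (V ⊕ W) → ℕ) (v : V) :
    vertexSum (completeBipartiteGraph V W) f (.inl v) = ∑ w, f s(.inl v, .inr w) := by
  have hnbr : (completeBipartiteGraph V W).neighborSet (.inl v) = Set.range .inr := by
    ext (_ | _) <;> simp
  rw [vertexSum_eq_finsum_neighborSet, hnbr, finsum_mem_range Sum.inr_injective,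
    finsum_eq_sum_of_fintype]

theorem vertexSum_inr [Fintype V] (f : Sym2 (V ⊕ W) → ℕ) (w : W) :
    vertexSum (completeBipartiteGraph V W) f (.inr w) = ∑ v, f s(.inl v, .inr w) := by
  have hnbr : (completeBipartiteGraph V W).neighborSet (.inr w) = Set.range .inl := by
    ext (_ | _) <;> simp
  rw [vertexSum_eq_finsum_neighborSet, hnbr, finsum_mem_range Sum.inl_injective,
    finsum_eq_sum_of_fintype]
  simp only [Sym2.eq_swap]

variable [Fintype V] [Fintype W]

theorem ncard_edgeSet_completeBipartiteGraph :
    (completeBipartiteGraph V W).edgeSet.ncard = card V * card W := by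
  simp [Set.ncard, SimpleGraph.encard_edgeSet_completeBipartiteGraph]

theorem two_mul_sum_labels {f : Sym2 (V ⊕ W) → ℕ}
    (hf : IsLocalAntimagic (completeBipartiteGraph V W) f) :
    2 * ∑ v, ∑ w, f s(.inl v, .inr w) = card V * card W * (card V * card W + 1) := by
  rw [← ncard_edgeSet_completeBipartiteGraph, ← two_mul_finsum_edgeSet hf.1,
    SimpleGraph.edgeSet_completeBipartiteGraph, finsum_mem_range (injective_mk_inl_inr V W),
    finsum_eq_sum_of_fintype, Fintype.sum_prod_type]

theorem two_mul_vertexSum_inl [Nonempty W] {f : Sym2 (V ⊕ W) → ℕ}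
    (hf : IsLocalAntimagic (completeBipartiteGraph V W) f)
    (hcount : colorCount (completeBipartiteGraph V W) f ≤ 2) (v : V) :
    2 * vertexSum (completeBipartiteGraph V W) f (.inl v) =
      card W * (card V * card W + 1) := by
  obtain ⟨w⟩ := ‹Nonempty W›
  have hconst (v' : V) : ∑ w, f s(.inl v', .inr w) = vertexSum _ f (.inl v) :=
    (vertexSum_inl f v').symm.trans <|
      vertexSum_eq_of_adj_of_colorCount_le_two hf hcount (w := .inr w) (by simp) (by simp)
  have htotal := two_mul_sum_labels hf
  simp only [hconst, Finset.sum_const, Finset.card_univ, smul_eq_mul] at htotal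
  exact Nat.eq_of_mul_eq_mul_left (Fintype.card_pos_iff.2 ⟨v⟩) (by linarith)

theorem two_mul_vertexSum_inr [Nonempty V] {f : Sym2 (V ⊕ W) → ℕ}
    (hf : IsLocalAntimagic (completeBipartiteGraph V W) f)
    (hcount : colorCount (completeBipartiteGraph V W) f ≤ 2) (w : W) :
    2 * vertexSum (completeBipartiteGraph V W) f (.inr w) =
      card V * (card V * card W + 1) := by
  obtain ⟨v⟩ := ‹Nonempty V›
  have hconst (w' : W) : ∑ v, f s(.inl v, .inr w') = vertexSum _ f (.inr w) :=
    (vertexSum_inr f w').symm.trans <|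
      vertexSum_eq_of_adj_of_colorCount_le_two hf hcount (w := .inl v) (by simp) (by simp)
  have htotal := two_mul_sum_labels hf
  rw [Finset.sum_comm] at htotal
  simp only [hconst, Finset.sum_const, Finset.card_univ, smul_eq_mul] at htotal
  exact Nat.eq_of_mul_eq_mul_left (Fintype.card_pos_iff.2 ⟨w⟩) (by linarith)

theorem three_le_colorCount [Nonempty V] [Nonempty W] (hpar : card V % 2 ≠ card W % 2)
    {f : Sym2 (V ⊕ W) → ℕ} (hf : IsLocalAntimagic (completeBipartiteGraph V W) f) :
    3 ≤ colorCount (completeBipartiteGraph V W) f := by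
  by_contra! hlt
  have hV : Even (card W * (card V * card W + 1)) :=
    even_iff_two_dvd.2 ⟨_, (two_mul_vertexSum_inl hf (by lia) (Classical.arbitrary V)).symm⟩
  have hW : Even (card V * (card V * card W + 1)) :=
    even_iff_two_dvd.2 ⟨_, (two_mul_vertexSum_inr hf (by lia) (Classical.arbitrary W)).symm⟩
  simp only [Nat.even_mul, Nat.even_add_one] at hV hW
  grind

/-- `g` is a centered labeling matrix: its entries are `2 * x - (card V * card W + 1)` for distinct
labels `x ∈ {1, …, card V * card W}`. A centered matrix is magic iff all its line sums vanish. -/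
structure IsCenteredLabeling (g : V → W → ℤ) : Prop where
  injective2 : Injective2 g
  abs_apply_lt : ∀ v w, |g v w| < card V * card W
  odd : ∀ v w, Odd (g v w + card V * card W)

namespace IsCenteredLabeling

variable {g : V → W → ℤ}

theorem exists_bijOn (hg : IsCenteredLabeling g) :
    ∃ f : Sym2 (V ⊕ W) → ℕ,
      Set.BijOn f (completeBipartiteGraph V W).edgeSet
        (Set.Icc 1 (completeBipartiteGraph V W).edgeSet.ncard) ∧
      ∀ v w, 2 * (f s(.inl v, .inr w) : ℤ) = card V * card W + 1 + g v w := by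
  let label (x : V × W) : ℕ := ((card V * card W + 1 + g x.1 x.2) / 2).toNat
  let f := extend (fun x : V × W => (s(.inl x.1, .inr x.2) : Sym2 (V ⊕ W))) label 0
  have hf (v : V) (w : W) : 2 * (f s(.inl v, .inr w) : ℤ) = card V * card W + 1 + g v w := by
    have happly : f s(.inl v, .inr w) = label (v, w) :=
      (injective_mk_inl_inr V W).extend_apply label 0 (v, w)
    obtain ⟨hlo, -⟩ := abs_lt.1 (hg.abs_apply_lt v w)
    obtain ⟨k, hk⟩ := hg.odd v w
    rw [happly]
    lia
  refine ⟨f, bijOn_Icc_one_ncard ?_ ?_, hf⟩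
  · rw [ncard_edgeSet_completeBipartiteGraph, SimpleGraph.edgeSet_completeBipartiteGraph]
    rintro _ ⟨⟨v, w⟩, rfl⟩
    obtain ⟨hlo, hhi⟩ := abs_lt.1 (hg.abs_apply_lt v w)
    have hlabel := hf v w
    refine ⟨?_, ?_⟩ <;> zify <;> linarith
  · rw [SimpleGraph.edgeSet_completeBipartiteGraph]
    rintro _ ⟨⟨v, w⟩, rfl⟩ _ ⟨⟨v', w'⟩, rfl⟩ heq
    have hlabel := hf v w
    have hlabel' := hf v' w'
    obtain ⟨rfl, rfl⟩ := hg.injective2 (show g v w = g v' w' by grind)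
    rfl

theorem exists_bijOn_vertexSum (hg : IsCenteredLabeling g) :
    ∃ f : Sym2 (V ⊕ W) → ℕ,
      Set.BijOn f (completeBipartiteGraph V W).edgeSet
        (Set.Icc 1 (completeBipartiteGraph V W).edgeSet.ncard) ∧
      (∀ v, 2 * (vertexSum (completeBipartiteGraph V W) f (.inl v) : ℤ) =
        card W * (card V * card W + 1) + ∑ w, g v w) ∧
      ∀ w, 2 * (vertexSum (completeBipartiteGraph V W) f (.inr w) : ℤ) =
        card V * (card V * card W + 1) + ∑ v, g v w := by
  obtain ⟨f, hbij, hf⟩ := hg.exists_bijOn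
  refine ⟨f, hbij, fun v => ?_, fun w => ?_⟩
  · rw [vertexSum_inl, Nat.cast_sum, Finset.mul_sum]
    simp [hf, Finset.sum_add_distrib]
  · rw [vertexSum_inr, Nat.cast_sum, Finset.mul_sum]
    simp [hf, Finset.sum_add_distrib]

theorem exists_colorCount_le_three (hg : IsCenteredLabeling g) (hrow : ∀ v, ∑ w, g v w = 0)
    (hcol : ∀ w, (∑ v, g v w).natAbs = 1) :
    ∃ f, IsLocalAntimagic (completeBipartiteGraph V W) f ∧
      colorCount (completeBipartiteGraph V W) f ≤ 3 := by
  obtain ⟨f, hbij, hinl, hinr⟩ := hg.exists_bijOn_vertexSum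
  simp only [hrow, add_zero] at hinl
  set N : ℤ := card V * card W
  have hne (v : V) (w : W) : vertexSum (completeBipartiteGraph V W) f (.inl v) ≠
      vertexSum (completeBipartiteGraph V W) f (.inr w) := by
    intro heq
    have hdvd : N + 1 ∣ ∑ v, g v w := ⟨card W - card V, by grind⟩
    have hNpos : 0 < N := by
      have := Fintype.card_pos_iff.2 ⟨v⟩
      have := Fintype.card_pos_iff.2 ⟨w⟩
      positivity
    have hunit : (N + 1).natAbs ∣ 1 := hcol w ▸ Int.natAbs_dvd_natAbs.2 hdvd
    have := Nat.le_of_dvd one_pos hunit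
    lia
  refine ⟨f, ⟨hbij, ?_⟩, ?_⟩
  · rintro (v | w) (v' | w') hadj
    · simp at hadj
    · exact hne v w'
    · exact (hne v' w).symm
    · simp at hadj
  · have hsub : (fun n : ℕ => 2 * (n : ℤ)) '' Set.range (vertexSum (completeBipartiteGraph V W) f) ⊆
        ({card W * (N + 1), card V * (N + 1) + 1, card V * (N + 1) - 1} : Finset ℤ) := by
      rintro _ ⟨_, ⟨v | w, rfl⟩, rfl⟩
      · simp [hinl]
      · rcases Int.natAbs_eq_iff.1 (hcol w) with hpos | hneg
        · simp [hinr, hpos]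
        · simp [hinr, hneg, sub_eq_add_neg]
    have hinj : Injective fun n : ℕ => 2 * (n : ℤ) := fun _ _ h => by lia
    rw [colorCount, ← Set.ncard_image_of_injective _ hinj]
    exact (Set.ncard_le_ncard hsub).trans ((Set.ncard_coe_finset _).trans_le Finset.card_le_three)

end IsCenteredLabeling

end CompleteBipartite

section SignedOddArray

open Fintype (card)

variable {R C : Type*} [Fintype R] [Fintype C]

/-- Each odd number below `2 * card R * card C` occurs exactly once, up to sign, among the entries
of `B`, and all column sums are `±1`. The array next to its negative is a centered labeling
matrix. -/
structure IsSignedOddArray (B : R → C → ℤ) : Prop where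
  odd : ∀ r c, Odd (B r c)
  natAbs_lt : ∀ r c, (B r c).natAbs < 2 * (card R * card C)
  injective2 : Injective2 fun r c => (B r c).natAbs
  natAbs_sum : ∀ c, (∑ r, B r c).natAbs = 1

theorem IsSignedOddArray.isCenteredLabeling {B : R → C → ℤ} (hB : IsSignedOddArray B) :
    IsCenteredLabeling fun r => Sum.elim (B r) (-B r) := by
  have hcard : card R * card (C ⊕ C) = 2 * (card R * card C) := by
    rw [Fintype.card_sum]
    ring
  have hne (r r' : R) (c c' : C) : B r c ≠ -B r' c' := by
    intro heq
    obtain ⟨rfl, rfl⟩ := hB.injective2 (show (B r c).natAbs = (B r' c').natAbs by lia)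
    have := hB.odd r c
    grind
  refine ⟨?_, ?_, ?_⟩
  · rintro r r' (c | c) (c' | c') heq
    · obtain ⟨rfl, rfl⟩ := hB.injective2 (congrArg Int.natAbs heq)
      exact ⟨rfl, rfl⟩
    · exact (hne r r' c c' heq).elim
    · exact (hne r' r c' c heq.symm).elim
    · obtain ⟨rfl, rfl⟩ := hB.injective2 (congrArg Int.natAbs (neg_inj.1 heq))
      exact ⟨rfl, rfl⟩
  · have hlt (r : R) (c : C) : |B r c| < card R * card (C ⊕ C) := by
      rw [Int.abs_eq_natAbs]
      exact_mod_cast hcard ▸ hB.natAbs_lt r c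
    rintro r (c | c)
    · exact hlt r c
    · exact (abs_neg _).trans_lt (hlt r c)
  · have heven : Even ((card R : ℤ) * card (C ⊕ C)) := by
      exact_mod_cast hcard ▸ even_two_mul _
    rintro r (c | c)
    · exact (hB.odd r c).add_even heven
    · exact (hB.odd r c).neg.add_even heven

/-- The midpoint of the two odd numbers below the first entry of column `i` of `threeRowArray m`.
As the radii of the pairs in even columns, and likewise in odd columns, are `1, 3, 5, …`, such pairs
fill an interval of odd numbers around a common center; the two intervals together run from
`2 * m + 1` to `6 * m - 1`. -/
def pairCenter (m i : ℕ) : ℤ :=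
  (if Even i then 4 * m else 2 * m) + 2 * (m / 2)

/-- The odd one among `i` and `i + 1`: half the difference of the two odd numbers below the first
entry of column `i` of `threeRowArray`. Twice this number differs from `2 * i + 1` by `1`. -/
def pairRadius (i : ℕ) : ℤ :=
  2 * (i / 2) + 1

/-- The base case of the construction of signed odd arrays. -/
def threeRowArray (m : ℕ) : Fin 3 → Fin m → ℤ
  | 0, i => -(2 * i.val + 1)
  | 1, i => pairRadius i - pairCenter m i
  | 2, i => pairCenter m i + pairRadius i

theorem isSignedOddArray_threeRowArray (m : ℕ) : IsSignedOddArray (threeRowArray m) where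
  odd r i := by
    fin_cases r <;> grind [threeRowArray, pairRadius, pairCenter]
  natAbs_lt r i := by
    simp only [Fintype.card_fin]
    fin_cases r <;> grind [threeRowArray, pairRadius, pairCenter]
  injective2 r r' i i' heq := by
    fin_cases r <;> fin_cases r' <;> grind [threeRowArray, pairRadius, pairCenter]
  natAbs_sum i := by
    rw [Fin.sum_univ_three]
    grind [threeRowArray, pairRadius, pairCenter]

variable {p m : ℕ}

/-- Extends the array `B` by two rows whose entries in column `i` have absolute values
`2 * p * m + 4 * i + 1` and `2 * p * m + 4 * i + 3` and add up to `-2` times the column sum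
`±1` of `B`. -/
def appendTwoRows (B : Fin p → Fin m → ℤ) : Fin (p + 2) → Fin m → ℤ :=
  Fin.append B ![fun i => (∑ r, B r i) * (2 * (p * m) + 4 * i + 1),
    fun i => -(∑ r, B r i) * (2 * (p * m) + 4 * i + 3)]

theorem appendTwoRows_castAdd (B : Fin p → Fin m → ℤ) (r : Fin p) :
    appendTwoRows B (Fin.castAdd 2 r) = B r :=
  Fin.append_left ..

theorem natAbs_appendTwoRows_natAdd {B : Fin p → Fin m → ℤ} (hB : IsSignedOddArray B) (k : Fin 2)
    (i : Fin m) :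
    (appendTwoRows B (Fin.natAdd p k) i).natAbs = 2 * (p * m) + 4 * i + 2 * k + 1 := by
  fin_cases k <;> simp [appendTwoRows, Int.natAbs_mul, hB.natAbs_sum] <;> norm_cast

theorem sum_appendTwoRows (B : Fin p → Fin m → ℤ) (i : Fin m) :
    ∑ r, appendTwoRows B r i = -∑ r, B r i := by
  rw [Fin.sum_univ_add, Fin.sum_univ_two]
  simp only [appendTwoRows, Fin.append_left, Fin.append_right, Matrix.cons_val_zero,
    Matrix.cons_val_one]
  ring

theorem injective2_natAbs_appendTwoRows {B : Fin p → Fin m → ℤ}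
    (hB : IsSignedOddArray B) : Injective2 fun r i => (appendTwoRows B r i).natAbs := by
  have hold := appendTwoRows_castAdd B
  have hnew := natAbs_appendTwoRows_natAdd hB
  have hlt (r : Fin p) (i : Fin m) : (B r i).natAbs < 2 * (p * m) := by
    simpa using hB.natAbs_lt r i
  intro r r' i i' heq
  induction r using Fin.addCases with
  | left r =>
    induction r' using Fin.addCases with
    | left r' =>
      simp only [hold] at heq
      obtain ⟨rfl, rfl⟩ := hB.injective2 heq
      exact ⟨rfl, rfl⟩
    | right k' =>
      simp only [hold, hnew] at heq
      have := hlt r i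
      lia
  | right k =>
    induction r' using Fin.addCases with
    | left r' =>
      simp only [hold, hnew] at heq
      have := hlt r' i'
      lia
    | right k' =>
      simp only [hnew] at heq
      obtain ⟨rfl, rfl⟩ : k = k' ∧ i = i' := by lia
      exact ⟨rfl, rfl⟩

theorem isSignedOddArray_appendTwoRows {B : Fin p → Fin m → ℤ} (hB : IsSignedOddArray B) :
    IsSignedOddArray (appendTwoRows B) := by
  have hold := appendTwoRows_castAdd B
  have hnew := natAbs_appendTwoRows_natAdd hB
  have hlt (r : Fin p) (i : Fin m) : (B r i).natAbs < 2 * (p * m) := by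
    simpa using hB.natAbs_lt r i
  refine ⟨fun r i => ?_, fun r i => ?_, injective2_natAbs_appendTwoRows hB, fun i => ?_⟩
  · induction r using Fin.addCases with
    | left r => exact hold r ▸ hB.odd r i
    | right k =>
      rw [← Int.natAbs_odd, hnew]
      grind
  · have hcard : card (Fin (p + 2)) * card (Fin m) = p * m + 2 * m := by
      rw [Fintype.card_fin, Fintype.card_fin]
      ring
    rw [hcard]
    induction r using Fin.addCases with
    | left r =>
      have := hlt r i
      rw [hold]
      lia
    | right k =>
      rw [hnew]
      lia
  · rw [sum_appendTwoRows, Int.natAbs_neg, hB.natAbs_sum]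

theorem exists_isSignedOddArray (k m : ℕ) :
    ∃ B : Fin (3 + 2 * k) → Fin m → ℤ, IsSignedOddArray B := by
  induction k with
  | zero => exact ⟨_, isSignedOddArray_threeRowArray m⟩
  | succ k ih =>
    obtain ⟨B, hB⟩ := ih
    exact ⟨_, isSignedOddArray_appendTwoRows hB⟩

end SignedOddArray

section LocalAntimagicChromaticNumber

open Fintype (card)

variable {V W : Type*} [Fintype V] [Fintype W]

theorem exists_colorCount_le_three_of_odd_of_even (hV : 3 ≤ card V) (hVodd : Odd (card V))
    (hWeven : Even (card W)) :
    ∃ f, IsLocalAntimagic (completeBipartiteGraph V W) f ∧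
      colorCount (completeBipartiteGraph V W) f ≤ 3 := by
  obtain ⟨k, hk⟩ : ∃ k, card V = 3 + 2 * k := by
    obtain ⟨k, hk⟩ := hVodd
    exact ⟨k - 1, by lia⟩
  obtain ⟨m, hm⟩ := hWeven
  obtain ⟨B, hB⟩ := exists_isSignedOddArray k m
  obtain ⟨f, hf, hcount⟩ := hB.isCenteredLabeling.exists_colorCount_le_three
    (fun r => by simp [Fintype.sum_sum_type])
    (by rintro (c | c) <;> simpa using hB.natAbs_sum c)
  let eW : W ≃ Fin m ⊕ Fin m := Fintype.equivOfCardEq (by simp [hm])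
  let e := SimpleGraph.completeBipartiteGraphCongr (Fintype.equivFinOfCardEq hk) eW
  exact ⟨_, hf.comp_map e, (colorCount_comp_map e f).trans_le hcount⟩

theorem chiLA_completeBipartiteGraph_of_odd_of_even [Nonempty W] (hV : 3 ≤ card V)
    (hVodd : Odd (card V)) (hWeven : Even (card W)) :
    chiLA (completeBipartiteGraph V W) = 3 := by
  have : Nonempty V := Fintype.card_pos_iff.1 (by lia)
  have hlower {f : Sym2 (V ⊕ W) → ℕ} (hf : IsLocalAntimagic (completeBipartiteGraph V W) f) :
      3 ≤ colorCount (completeBipartiteGraph V W) f :=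
    three_le_colorCount (by grind) hf
  obtain ⟨f, hf, hupper⟩ := exists_colorCount_le_three_of_odd_of_even hV hVodd hWeven
  have hmem : 3 ∈ {n | ∃ f, IsLocalAntimagic (completeBipartiteGraph V W) f ∧
      colorCount (completeBipartiteGraph V W) f = n} := ⟨f, hf, hupper.antisymm (hlower hf)⟩
  refine (Nat.sInf_le hmem).antisymm (le_csInf ⟨3, hmem⟩ ?_)
  rintro n ⟨f, hf, rfl⟩
  exact hlower hf

/-- Swapping the two parts, as a graph isomorphism. -/
def completeBipartiteGraphComm (V W : Type*) :
    completeBipartiteGraph V W ≃g completeBipartiteGraph W V where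
  toEquiv := Equiv.sumComm V W
  map_rel_iff' := by simp [or_comm, and_comm]

theorem chiLA_Kpq_odd_even_general (hV : 2 ≤ card V) (hW : 2 ≤ card W)
    (hpar : card V % 2 ≠ card W % 2) : chiLA (completeBipartiteGraph V W) = 3 := by
  have : Nonempty V := Fintype.card_pos_iff.1 (by lia)
  have : Nonempty W := Fintype.card_pos_iff.1 (by lia)
  rcases Nat.even_or_odd (card V) with hVeven | hVodd
  · rw [chiLA_congr (completeBipartiteGraphComm V W)]
    exact chiLA_completeBipartiteGraph_of_odd_of_even (by grind) (by grind) hVeven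
  · exact chiLA_completeBipartiteGraph_of_odd_of_even (by grind) hVodd (by grind)

end LocalAntimagicChromaticNumber

theorem chiLA_Kpq_odd_even (p q : ℕ) (hp : 3 ≤ p) (hq : 3 ≤ q) (hpar : p % 2 ≠ q % 2) :
    chiLA (completeBipartiteGraph (Fin p) (Fin q)) = 3 := by
  apply chiLA_Kpq_odd_even_general <;> simp only [Fintype.card_fin] <;> lia
end
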